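/- arXiv:1506.08317 — 3 statements merged into one kernel-verified Lean document; each statement's English description precedes it below -/
import Mathlib

section
/- Let φ : (1,∞) → (0,∞) be an increasing function with lim_{t→∞} φ(t)/log t = 0. Then for every constant c > 0 there exist r ∈ (1,2), a weight w, a function f with ∫_ℝ |f| M_r w dx < ∞, and λ > 0 such that λ·w({x ∈ ℝ : |Hf(x)| > λ}) > c·φ(r')·∫_ℝ |f| M_r w dx, where r' = r/(r−1). (That is, the factor log(r') in the known inequality λ w({|Hf|>λ}) ≤ c log(r') ‖f‖_{L^1(M_r w)} cannot be replaced by any φ(r') growing more slowly than log(r').) -/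
open MeasureTheory Set Filter Topology
open scoped ENNReal

noncomputable section

namespace RT

/-- The Hilbert transform `Hf(x)`, defined as the principal-value limit
`lim_{ε→0⁺} ∫_{|x-y|>ε} f(y)/(x-y) dy` (junk value at points where the limit
does not exist). -/
def Hil (f : ℝ → ℝ) (x : ℝ) : ℝ :=
  limUnder (𝓝[>] (0 : ℝ)) fun ε => ∫ y in {y : ℝ | ε < |x - y|}, f y / (x - y)

/-- The (uncentered) Hardy–Littlewood maximal function over bounded intervals:
`Mf(x) = sup_{I ∋ x} (1/|I|) ∫_I |f|`. -/
def HLMax (f : ℝ → ℝ) (x : ℝ) : ℝ≥0∞ :=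
  ⨆ (a : ℝ) (b : ℝ) (_ : a < b) (_ : x ∈ Icc a b),
    (ENNReal.ofReal (b - a))⁻¹ * ∫⁻ y in Ioo a b, ENNReal.ofReal |f y|

/-- `M_r f = (M(|f|^r))^{1/r}`. -/
def Mr (r : ℝ) (f : ℝ → ℝ) (x : ℝ) : ℝ≥0∞ :=
  HLMax (fun y => |f y| ^ r) x ^ (1 / r)

/-- The Orlicz maximal operator
`M_Φ f(x) = sup_{I ∋ x} inf {λ > 0 : (1/|I|) ∫_I Φ(|f|/λ) ≤ 1}`. -/
def MOrlicz (Φ : ℝ → ℝ) (f : ℝ → ℝ) (x : ℝ) : ℝ≥0∞ :=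
  ⨆ (a : ℝ) (b : ℝ) (_ : a < b) (_ : x ∈ Icc a b),
    sInf {lam : ℝ≥0∞ | ∃ l : ℝ, 0 < l ∧ lam = ENNReal.ofReal l ∧
      (∫⁻ y in Ioo a b, ENNReal.ofReal (Φ (|f y| / l))) ≤ ENNReal.ofReal (b - a)}

/-- The centered maximal operator with respect to a weight `v`:
`M^c_v h(x) = sup_{ρ>0} (1/v(B(x,ρ))) ∫_{B(x,ρ)} |h| v`. -/
def Mc (v h : ℝ → ℝ) (x : ℝ) : ℝ≥0∞ :=
  ⨆ (ρ : ℝ) (_ : 0 < ρ),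
    (∫⁻ y in Ioo (x - ρ) (x + ρ), ENNReal.ofReal (v y))⁻¹ *
      ∫⁻ y in Ioo (x - ρ) (x + ρ), ENNReal.ofReal |h y| * ENNReal.ofReal (v y)

/-- A Young function: convex, increasing, `Φ(0) = 0`, `Φ(t)/t → ∞`. -/
structure IsYoung (Φ : ℝ → ℝ) : Prop where
  convexOn : ConvexOn ℝ (Ici 0) Φ
  mono : MonotoneOn Φ (Ici 0)
  map_zero : Φ 0 = 0
  superlinear : Tendsto (fun t => Φ t / t) atTop atTop

/-- A weight: a nonnegative locally integrable function on `ℝ`. -/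
def IsWeight (w : ℝ → ℝ) : Prop :=
  (∀ x, 0 ≤ w x) ∧ LocallyIntegrable w volume

/-! Triadic machinery: intervals are represented by their endpoint pairs,
`(a, b)` corresponding to `[a, b)`. -/

/-- The length of the interval. -/
def len (I : ℝ × ℝ) : ℝ := I.2 - I.1

/-- The set `[a, b)` of the interval `I = (a, b)`. -/
def ivl (I : ℝ × ℝ) : Set ℝ := Ico I.1 I.2

/-- A triadic interval `[3^j n, 3^j (n+1))`, `j, n ∈ ℤ`. -/
def IsTriadic (I : ℝ × ℝ) : Prop :=
  ∃ j n : ℤ, I.1 = (3 : ℝ) ^ j * n ∧ I.2 = (3 : ℝ) ^ j * (n + 1)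

/-- The middle third `I^Δ` of `I`: same center, one third of the length. -/
def mid (I : ℝ × ℝ) : ℝ × ℝ := (I.1 + (I.2 - I.1) / 3, I.2 - (I.2 - I.1) / 3)

/-- `P` assigns to each triadic interval `J ⊆ [0,1)` a triadic interval
adjacent to `J^Δ` (on its left or on its right) with `|P J| = 3^{-k} |J|`. -/
def GoodP (k : ℕ) (P : ℝ × ℝ → ℝ × ℝ) : Prop :=
  ∀ J : ℝ × ℝ, IsTriadic J → ivl J ⊆ Ico (0 : ℝ) 1 →
    IsTriadic (P J) ∧ len (P J) = len J / 3 ^ k ∧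
      ((P J).2 = (mid J).1 ∨ (P J).1 = (mid J).2)

/-- The families `𝒥_l`: `𝒥_1 = {[0,1)}`, and `𝒥_{l+1}` consists of the `3^{k-1}`
triadic subintervals of `J^Δ` of length `|J|/3^k`, for each `J ∈ 𝒥_l`.
(`𝒥_0` is empty.) -/
def Jfam (k : ℕ) : ℕ → Set (ℝ × ℝ)
  | 0 => ∅
  | 1 => {((0 : ℝ), (1 : ℝ))}
  | l + 2 => {J' | IsTriadic J' ∧ ∃ J ∈ Jfam k (l + 1),
      len J' = len J / 3 ^ k ∧ ivl J' ⊆ ivl (mid J)}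

/-- The families `ℐ_l = {P J : J ∈ 𝒥_l}`. -/
def Ifam (k : ℕ) (P : ℝ × ℝ → ℝ × ℝ) (l : ℕ) : Set (ℝ × ℝ) :=
  P '' Jfam k l

/-- `Ω_l = ⋃_{I ∈ ℐ_l} I`. -/
def Omega (k : ℕ) (P : ℝ × ℝ → ℝ × ℝ) (l : ℕ) : Set ℝ :=
  ⋃ I ∈ Ifam k P l, ivl I

/-- The constant `3^k / (3^{k-1} + 1)`. -/
def alpha (k : ℕ) : ℝ := 3 ^ k / (3 ^ (k - 1) + 1)

/-- The Reguera–Thiele weight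
`w_k = ∑_{l=1}^∞ (3^k/(3^{k-1}+1))^l χ_{Ω_l}`. -/
def wk (k : ℕ) (P : ℝ × ℝ → ℝ × ℝ) (x : ℝ) : ℝ :=
  ∑' l : ℕ, alpha k ^ (l + 1) * (Omega k P (l + 1)).indicator (fun _ => (1 : ℝ)) x

/-!
For an integer `k ≤ 1 / (r - 1)`, let `w` be the normalised indicator of the `k`-th stage of the
Cantor set of all numbers whose base `2k` digits are `< k`. Its density doubles from one generation
to the next, and since `w ^ r ≤ 2 w`, the function `M_r w` is of the order `2 ^ l` in the gaps of
generation `l`. Each gap carries a dipole, `+1` near its left end and `-1` near its right end. A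
generation of dipoles then has norm of order `1 / k` in `L¹(M_r w)`, and `k` generations have norm
of order one.

All dipoles make a contribution of the same sign to `Hf` on the support of `w`, so nothing is lost
by cancellation. The dipole nearest to a point with digit `j` contributes at least a multiple of
`1 / (k + 2 - j)`, which is of the order `(log k) / k` on average over `j`. Under `w` the digits are
independent and uniformly distributed, hence the `k` generations add up to at least a multiple of
`log k`, which is comparable to `log r'`, outside a set of small `w`-measure.
-/

/-- The natural numbers with `n` digits in base `b`, all of them `< k`. They index the intervals of
the `n`-th stage of the Cantor set of all numbers in `[0, 1)` whose base `b` digits are `< k`. -/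
def cantorIndex (b k n : ℕ) : Finset ℕ :=
  {p ∈ Finset.range (b ^ n) | ∀ i < n, p / b ^ i % b < k}

section CantorIndex

variable {b k : ℕ}

lemma mem_cantorIndex {n p : ℕ} :
    p ∈ cantorIndex b k n ↔ p < b ^ n ∧ ∀ i < n, p / b ^ i % b < k := by
  simp only [cantorIndex, Finset.mem_filter, Finset.mem_range]

lemma mem_cantorIndex_succ (hb : 0 < b) {n p : ℕ} :
    p ∈ cantorIndex b k (n + 1) ↔ p / b ∈ cantorIndex b k n ∧ p % b < k := by
  simp only [mem_cantorIndex, Nat.forall_lt_succ_left, Nat.div_lt_iff_lt_mul hb, pow_succ',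
    Nat.div_div_eq_div_mul, pow_zero, Nat.div_one, mul_comm b (b ^ n)]
  tauto

lemma mem_cantorIndex_add (hb : 0 < b) {m n p : ℕ} :
    p ∈ cantorIndex b k (m + n) ↔
      p / b ^ n ∈ cantorIndex b k m ∧ p % b ^ n ∈ cantorIndex b k n := by
  induction n generalizing p with
  | zero => simp [mem_cantorIndex, Nat.mod_one]
  | succ n ih =>
    rw [← add_assoc, mem_cantorIndex_succ hb, ih, mem_cantorIndex_succ hb, pow_succ',
      Nat.div_div_eq_div_mul, Nat.mod_mul_right_div_self, Nat.mod_mul_right_mod, and_assoc]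

lemma sum_cantorIndex_succ {R : Type*} [AddCommMonoid R] (hkb : k ≤ b) (n : ℕ) (F : ℕ → R) :
    ∑ p ∈ cantorIndex b k (n + 1), F p =
      ∑ q ∈ cantorIndex b k n, ∑ j ∈ Finset.range k, F (b * q + j) := by
  rw [← Finset.sum_product']
  refine Finset.sum_nbij' (fun p => (p / b, p % b)) (fun qj => b * qj.1 + qj.2) ?_ ?_ ?_ ?_ ?_
  · intro p hp
    have hb : 0 < b := Nat.pos_of_ne_zero fun h => by simp [h, mem_cantorIndex] at hp
    simpa using (mem_cantorIndex_succ hb).1 hp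
  · rintro ⟨q, j⟩ hqj
    obtain ⟨hq, hj⟩ : q ∈ cantorIndex b k n ∧ j < k := by simpa using hqj
    rw [mem_cantorIndex_succ (by omega), Nat.mul_add_div (by omega),
      Nat.div_eq_of_lt (hj.trans_le hkb), Nat.mul_add_mod, Nat.mod_eq_of_lt (hj.trans_le hkb)]
    exact ⟨hq, hj⟩
  · exact fun p _ => Nat.div_add_mod p b
  · rintro ⟨q, j⟩ hqj
    have hj : j < k := by simpa using (Finset.mem_product.1 hqj).2
    simp [Nat.mul_add_div (show 0 < b by omega), Nat.div_eq_of_lt (hj.trans_le hkb),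
      Nat.mod_eq_of_lt (hj.trans_le hkb)]
  · exact fun p _ => by rw [Nat.div_add_mod]

lemma sum_cantorIndex_prod_digit {R : Type*} [CommSemiring R] (hkb : k ≤ b) (n : ℕ) (g : ℕ → R) :
    ∑ p ∈ cantorIndex b k n, ∏ i ∈ Finset.range n, g (p / b ^ i % b) =
      (∑ j ∈ Finset.range k, g j) ^ n := by
  induction n with
  | zero => simp [cantorIndex]
  | succ n ih =>
    rw [sum_cantorIndex_succ hkb, pow_succ, ← ih, Finset.sum_mul_sum]
    refine Finset.sum_congr rfl fun q _ => Finset.sum_congr rfl fun j hj => ?_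
    have hjb : j < b := (Finset.mem_range.1 hj).trans_le hkb
    have hdiv : (b * q + j) / b = q := by
      rw [Nat.mul_add_div (by omega), Nat.div_eq_of_lt hjb, add_zero]
    simp only [Finset.prod_range_succ', pow_succ', ← Nat.div_div_eq_div_mul, hdiv, pow_zero,
      Nat.div_one, Nat.mul_add_mod, Nat.mod_eq_of_lt hjb]

lemma card_cantorIndex (hkb : k ≤ b) (n : ℕ) : (cantorIndex b k n).card = k ^ n := by
  simpa using sum_cantorIndex_prod_digit hkb n fun _ => (1 : ℕ)

lemma card_filter_cantorIndex_div_eq_le (hb : 0 < b) (hkb : k ≤ b) (m n q : ℕ) :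
    {p ∈ cantorIndex b k (m + n) | p / b ^ n = q}.card ≤ k ^ n := by
  rw [← card_cantorIndex hkb n]
  refine Finset.card_le_card_of_injOn (· % b ^ n) (fun p hp => ?_) fun p hp p' hp' h => ?_
  · exact ((mem_cantorIndex_add hb).1 (Finset.mem_filter.1 hp).1).2
  · rw [← Nat.div_add_mod p (b ^ n), ← Nat.div_add_mod p' (b ^ n), (Finset.mem_filter.1 hp).2,
      (Finset.mem_filter.1 hp').2,
      show p % b ^ n = p' % b ^ n from h]

end CantorIndex

section DigitSums

variable {b k : ℕ} {g : ℕ → ℝ}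

lemma exp_neg_le_one_sub_half {y : ℝ} (h0 : 0 ≤ y) (h1 : y ≤ 1) : Real.exp (-y) ≤ 1 - y / 2 := by
  calc Real.exp (-y) ≤ (1 + y)⁻¹ := by
        rw [Real.exp_neg]
        exact inv_anti₀ (by linarith) (by linarith [Real.add_one_le_exp y])
    _ ≤ 1 - y / 2 := by
        rw [inv_le_iff_one_le_mul₀ (by linarith)]
        nlinarith

lemma sum_exp_neg_le (hk : 0 < k) (hg : ∀ j < k, g j ∈ Icc 0 1) :
    ∑ j ∈ Finset.range k, Real.exp (-g j) ≤
      k * Real.exp (-((∑ j ∈ Finset.range k, g j) / (2 * k))) := by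
  set T := ∑ j ∈ Finset.range k, g j with hT
  calc ∑ j ∈ Finset.range k, Real.exp (-g j) ≤ ∑ j ∈ Finset.range k, (1 - g j / 2) :=
        Finset.sum_le_sum fun j hj =>
          have hgj := hg j (Finset.mem_range.1 hj)
          exp_neg_le_one_sub_half hgj.1 hgj.2
    _ = k * (-(T / (2 * k)) + 1) := by
        rw [Finset.sum_sub_distrib, ← Finset.sum_div, ← hT]
        simp only [Finset.sum_const, Finset.card_range, nsmul_eq_mul, mul_one]
        field_simp
        ring
    _ ≤ k * Real.exp (-(T / (2 * k))) := by
        gcongr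
        exact Real.add_one_le_exp _

lemma sum_cantorIndex_exp_neg_le (hk : 0 < k) (hkb : k ≤ b) (hg : ∀ j < k, g j ∈ Icc 0 1)
    (n : ℕ) :
    ∑ p ∈ cantorIndex b k n, Real.exp (-∑ i ∈ Finset.range n, g (p / b ^ i % b)) ≤
      k ^ n * Real.exp (-(n * (∑ j ∈ Finset.range k, g j) / (2 * k))) := by
  simp only [← Finset.sum_neg_distrib, Real.exp_sum]
  rw [sum_cantorIndex_prod_digit hkb n fun j => Real.exp (-g j)]
  refine (pow_le_pow_left₀ (by positivity) (sum_exp_neg_le hk hg) n).trans_eq ?_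
  rw [mul_pow, ← Real.exp_nat_mul]
  ring_nf

/-- Chernoff's method: the exponential moment of the digit sum factors over the digits. -/
lemma card_filter_sum_digit_le (hk : 0 < k) (hkb : k ≤ b) (hg : ∀ j < k, g j ∈ Icc 0 1) (n : ℕ) :
    ({p ∈ cantorIndex b k n | ∑ i ∈ Finset.range n, g (p / b ^ i % b) ≤
      n * (∑ j ∈ Finset.range k, g j) / (4 * k)}.card : ℝ) ≤
      k ^ n * Real.exp (-(n * (∑ j ∈ Finset.range k, g j) / (4 * k))) := by
  set T := ∑ j ∈ Finset.range k, g j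
  set S : ℕ → ℝ := fun p => ∑ i ∈ Finset.range n, g (p / b ^ i % b)
  set s := n * T / (4 * k) with hs
  have hmarkov : ({p ∈ cantorIndex b k n | S p ≤ s}.card : ℝ) * Real.exp (-s) ≤
      ∑ p ∈ cantorIndex b k n, Real.exp (-S p) := by
    rw [← nsmul_eq_mul]
    refine (Finset.card_nsmul_le_sum _ _ _ fun p hp => ?_).trans
      (Finset.sum_le_sum_of_subset_of_nonneg (Finset.filter_subset (S · ≤ s) _)
        fun _ _ _ => (Real.exp_pos _).le)
    exact Real.exp_le_exp.2 (neg_le_neg (Finset.mem_filter.1 hp).2)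
  refine le_of_mul_le_mul_right (hmarkov.trans ?_) (Real.exp_pos (-s))
  rw [mul_assoc, ← Real.exp_add, show -s + -s = -(n * T / (2 * k)) by rw [hs]; field_simp; ring]
  exact sum_cantorIndex_exp_neg_le hk hkb hg n

lemma half_pow_le_card_filter_lt_sum_digit (hk : 0 < k) (hkb : k ≤ b)
    (hg : ∀ j < k, g j ∈ Icc 0 1) {n : ℕ}
    (hn : 1 ≤ n * (∑ j ∈ Finset.range k, g j) / (4 * k)) :
    (k : ℝ) ^ n / 2 ≤ ({p ∈ cantorIndex b k n | n * (∑ j ∈ Finset.range k, g j) / (4 * k) <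
      ∑ i ∈ Finset.range n, g (p / b ^ i % b)}.card : ℝ) := by
  have hfew := (card_filter_sum_digit_le hk hkb hg n).trans
    (mul_le_mul_of_nonneg_left ((Real.exp_le_exp.2 (neg_le_neg hn)).trans
      Real.exp_neg_one_lt_half.le) (by positivity))
  have hcard := Finset.card_filter_add_card_filter_not (s := cantorIndex b k n) fun p =>
    ∑ i ∈ Finset.range n, g (p / b ^ i % b) ≤ n * (∑ j ∈ Finset.range k, g j) / (4 * k)
  simp only [not_le] at hcard
  rw [card_cantorIndex hkb, ← @Nat.cast_inj ℝ, Nat.cast_add, Nat.cast_pow] at hcard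
  linarith

end DigitSums

/-- The `b`-adic interval `[q / b ^ m, (q + 1) / b ^ m)`. -/
def adicInterval (b m q : ℕ) : Set ℝ :=
  Ico ((q : ℝ) / (b : ℝ) ^ m) (((q : ℝ) + 1) / (b : ℝ) ^ m)

/-- The `n`-th stage of the Cantor set of all numbers in `[0, 1)` whose base `b` digits are all
`< k`: only the first `n` digits are restricted. -/
def cantorStage (b k n : ℕ) : Set ℝ := {x | 0 ≤ x ∧ ⌊(b : ℝ) ^ n * x⌋₊ ∈ cantorIndex b k n}

section CantorStage

variable {b k m n q : ℕ} {x : ℝ}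

lemma measurableSet_adicInterval : MeasurableSet (adicInterval b m q) := measurableSet_Ico

lemma volume_adicInterval : volume (adicInterval b m q) = ENNReal.ofReal (1 / (b : ℝ) ^ m) := by
  rw [adicInterval, Real.volume_Ico]
  ring_nf

lemma mem_adicInterval_iff_mul_mem_Ico (hb : 0 < b) :
    x ∈ adicInterval b m q ↔ (b : ℝ) ^ m * x ∈ Ico (q : ℝ) (q + 1) := by
  have hbm : (0 : ℝ) < (b : ℝ) ^ m := by positivity
  rw [adicInterval, mem_Ico, div_le_iff₀ hbm, lt_div_iff₀ hbm, mul_comm x, mem_Ico]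

lemma mem_adicInterval_iff_floor_eq (hb : 0 < b) :
    x ∈ adicInterval b m q ↔ 0 ≤ x ∧ ⌊(b : ℝ) ^ m * x⌋₊ = q := by
  have hbm : (0 : ℝ) < (b : ℝ) ^ m := by positivity
  rw [mem_adicInterval_iff_mul_mem_Ico hb]
  refine ⟨fun h => ?_, fun ⟨hx, hq⟩ => (Nat.floor_eq_iff (by positivity)).1 hq⟩
  have hmul : 0 ≤ (b : ℝ) ^ m * x := (Nat.cast_nonneg q).trans h.1
  exact ⟨(mul_nonneg_iff_of_pos_left hbm).1 hmul, (Nat.floor_eq_iff hmul).2 h⟩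

lemma floor_pow_mul_eq_div (hb : 0 < b) (m n : ℕ) (x : ℝ) :
    ⌊(b : ℝ) ^ m * x⌋₊ = ⌊(b : ℝ) ^ (m + n) * x⌋₊ / b ^ n := by
  rw [← Nat.floor_div_natCast, Nat.cast_pow, pow_add]
  congr 1
  field_simp

lemma floor_mem_cantorIndex (hb : 0 < b) (hmn : m ≤ n) (hx : x ∈ cantorStage b k n) :
    ⌊(b : ℝ) ^ m * x⌋₊ ∈ cantorIndex b k m := by
  obtain ⟨l, rfl⟩ := Nat.exists_eq_add_of_le hmn
  rw [floor_pow_mul_eq_div hb m l]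
  exact ((mem_cantorIndex_add hb).1 hx.2).1

lemma adicInterval_subset_cantorStage (hb : 0 < b) (hq : q ∈ cantorIndex b k n) :
    adicInterval b n q ⊆ cantorStage b k n := fun x hx => by
  obtain ⟨hx0, hfloor⟩ := (mem_adicInterval_iff_floor_eq hb).1 hx
  exact ⟨hx0, hfloor ▸ hq⟩

lemma measurableSet_cantorStage : MeasurableSet (cantorStage b k n) :=
  measurableSet_Ici.inter <|
    (Nat.measurable_floor.comp (measurable_const_mul ((b : ℝ) ^ n)))
      (Finset.measurableSet (cantorIndex b k n))

lemma volume_biUnion_adicInterval (hb : 0 < b) (m : ℕ) (s : Finset ℕ) :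
    volume (⋃ p ∈ s, adicInterval b m p) = ENNReal.ofReal (s.card / (b : ℝ) ^ m) := by
  rw [measure_biUnion_finset (fun p _ p' _ hne => ?_) fun _ _ => measurableSet_adicInterval]
  · simp only [volume_adicInterval, Finset.sum_const, nsmul_eq_mul]
    rw [← ENNReal.ofReal_natCast, ← ENNReal.ofReal_mul (by positivity), mul_one_div]
  · refine Set.disjoint_left.2 fun x hx hx' => hne ?_
    rw [← ((mem_adicInterval_iff_floor_eq hb).1 hx).2, ((mem_adicInterval_iff_floor_eq hb).1 hx').2]

lemma volume_cantorStage_inter_adicInterval_le (hb : 0 < b) (hkb : k ≤ b) (m n q : ℕ) :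
    volume (cantorStage b k (m + n) ∩ adicInterval b m q) ≤
      ENNReal.ofReal ((k : ℝ) ^ n / (b : ℝ) ^ (m + n)) := by
  have hsub : cantorStage b k (m + n) ∩ adicInterval b m q ⊆
      ⋃ p ∈ {p ∈ cantorIndex b k (m + n) | p / b ^ n = q}, adicInterval b (m + n) p := by
    rintro x ⟨⟨hx0, hxC⟩, hxq⟩
    have hfloor := ((mem_adicInterval_iff_floor_eq hb).1 hxq).2
    rw [floor_pow_mul_eq_div hb m n] at hfloor
    exact mem_biUnion (Finset.mem_coe.2 (Finset.mem_filter.2 ⟨hxC, hfloor⟩))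
      ((mem_adicInterval_iff_floor_eq hb).2 ⟨hx0, rfl⟩)
  refine (measure_mono hsub).trans ?_
  rw [volume_biUnion_adicInterval hb]
  gcongr
  exact_mod_cast card_filter_cantorIndex_div_eq_le hb hkb m n q

lemma card_Icc_floor_le {u v : ℝ} (huv : 1 ≤ v - u) :
    ((Finset.Icc ⌊u⌋₊ ⌊v⌋₊).card : ℝ) ≤ 3 * (v - u) := by
  have hle : ⌊u⌋₊ ≤ ⌊v⌋₊ := Nat.floor_mono (by linarith)
  rw [Nat.card_Icc, Nat.cast_sub (by omega), Nat.cast_add, Nat.cast_one]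
  have hu := Nat.lt_floor_add_one u
  rcases le_total 0 v with hv | hv
  · linarith [Nat.floor_le hv]
  · rw [Nat.floor_of_nonpos hv, Nat.floor_of_nonpos (by linarith)]
    norm_num
    linarith

lemma volume_cantorStage_inter_Ioo_le (hb : 0 < b) (hkb : k ≤ b) (m n : ℕ) {u v : ℝ}
    (huv : 1 / (b : ℝ) ^ m ≤ v - u) :
    volume (cantorStage b k (m + n) ∩ Ioo u v) ≤
      ENNReal.ofReal (3 * ((k : ℝ) / b) ^ n * (v - u)) := by
  have hbm : (0 : ℝ) < (b : ℝ) ^ m := by positivity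
  set s := Finset.Icc ⌊(b : ℝ) ^ m * u⌋₊ ⌊(b : ℝ) ^ m * v⌋₊
  have hcard : (s.card : ℝ) ≤ 3 * ((b : ℝ) ^ m * (v - u)) := by
    rw [mul_sub]
    refine card_Icc_floor_le ?_
    rwa [← mul_sub, ← div_le_iff₀' hbm]
  have hsub : cantorStage b k (m + n) ∩ Ioo u v ⊆
      ⋃ q ∈ s, cantorStage b k (m + n) ∩ adicInterval b m q := by
    rintro x ⟨hxC, hux, hxv⟩
    have hfloor : ⌊(b : ℝ) ^ m * x⌋₊ ∈ s :=
      Finset.mem_Icc.2 ⟨Nat.floor_mono (by gcongr), Nat.floor_mono (by gcongr)⟩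
    exact mem_biUnion (Finset.mem_coe.2 hfloor)
      ⟨hxC, (mem_adicInterval_iff_floor_eq hb).2 ⟨hxC.1, rfl⟩⟩
  calc volume (cantorStage b k (m + n) ∩ Ioo u v)
      ≤ ∑ q ∈ s, volume (cantorStage b k (m + n) ∩ adicInterval b m q) :=
        (measure_mono hsub).trans (measure_biUnion_finset_le _ _)
    _ ≤ s.card • ENNReal.ofReal ((k : ℝ) ^ n / (b : ℝ) ^ (m + n)) :=
        Finset.sum_le_card_nsmul _ _ _ fun q _ =>
          volume_cantorStage_inter_adicInterval_le hb hkb m n q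
    _ = ENNReal.ofReal (s.card * ((k : ℝ) ^ n / (b : ℝ) ^ (m + n))) := by
        rw [nsmul_eq_mul, ← ENNReal.ofReal_natCast, ← ENNReal.ofReal_mul (by positivity)]
    _ ≤ ENNReal.ofReal (3 * ((b : ℝ) ^ m * (v - u)) * ((k : ℝ) ^ n / (b : ℝ) ^ (m + n))) := by
        gcongr
    _ = ENNReal.ofReal (3 * ((k : ℝ) / b) ^ n * (v - u)) := by
        rw [pow_add, div_pow]
        congr 1
        field_simp

lemma add_two_le_or_le_of_mod_lt {p i : ℕ} (hp : p % b < k) (hki : k < i) (hib : i + 2 ≤ b)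
    (q : ℕ) : p + 2 ≤ b * q + i ∨ b * q + i + 2 ≤ p := by
  by_contra! h
  obtain ⟨j, rfl⟩ : ∃ j, p = b * q + j := ⟨p - b * q, by omega⟩
  rw [Nat.mul_add_mod, Nat.mod_eq_of_lt (by omega)] at hp
  omega

/-- The digits next to `i` also lie in the gap `k, …, b - 1`. -/
lemma one_div_pow_lt_abs_sub {l i : ℕ} (hki : k < i) (hib : i + 2 ≤ b) (hln : l < n) {y : ℝ}
    (hx : x ∈ adicInterval b (l + 1) (b * q + i)) (hy : y ∈ cantorStage b k n) :
    1 / (b : ℝ) ^ (l + 1) < |y - x| := by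
  have hb : 0 < b := by omega
  have hbl : (0 : ℝ) < (b : ℝ) ^ (l + 1) := by positivity
  obtain ⟨hpx, hxp⟩ := (mem_adicInterval_iff_mul_mem_Ico hb).1 hx
  have hp := ((mem_cantorIndex_succ hb).1 (floor_mem_cantorIndex hb hln hy)).2
  have hyp := Nat.lt_floor_add_one ((b : ℝ) ^ (l + 1) * y)
  have hpy := Nat.floor_le (a := (b : ℝ) ^ (l + 1) * y) (mul_nonneg hbl.le hy.1)
  have habs : |(b : ℝ) ^ (l + 1) * (y - x)| = (b : ℝ) ^ (l + 1) * |y - x| := by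
    rw [abs_mul, abs_of_pos hbl]
  rw [div_lt_iff₀' hbl, ← habs, mul_sub, lt_abs]
  rcases add_two_le_or_le_of_mod_lt hp hki hib q with h | h
  · right
    have : (⌊(b : ℝ) ^ (l + 1) * y⌋₊ : ℝ) + 2 ≤ (b * q + i : ℕ) := by exact_mod_cast h
    linarith
  · left
    have : ((b * q + i : ℕ) : ℝ) + 2 ≤ ⌊(b : ℝ) ^ (l + 1) * y⌋₊ := by exact_mod_cast h
    linarith

end CantorStage

/-- The normalised indicator of the `n`-th Cantor stage, a weight of total mass one. -/
def cantorWeight (b k n : ℕ) : ℝ → ℝ :=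
  (cantorStage b k n).indicator fun _ => ((b : ℝ) / k) ^ n

section CantorWeight

variable {b k : ℕ}

lemma isWeight_cantorWeight (b k n : ℕ) : IsWeight (cantorWeight b k n) :=
  ⟨indicator_nonneg fun _ _ => by positivity,
    (locallyIntegrable_const _).indicator measurableSet_cantorStage⟩

lemma setLIntegral_cantorWeight (n : ℕ) (s : Set ℝ) :
    ∫⁻ x in s, ENNReal.ofReal (cantorWeight b k n x) =
      ENNReal.ofReal (((b : ℝ) / k) ^ n) * volume (cantorStage b k n ∩ s) := by
  have hind : (fun x => ENNReal.ofReal (cantorWeight b k n x)) =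
      (cantorStage b k n).indicator fun _ => ENNReal.ofReal (((b : ℝ) / k) ^ n) := by
    simp only [cantorWeight, ← comp_indicator_const (M := ℝ) _ ENNReal.ofReal ENNReal.ofReal_zero]
  rw [hind, lintegral_indicator measurableSet_cantorStage, setLIntegral_const,
    Measure.restrict_apply measurableSet_cantorStage]

lemma card_div_pow_le_setLIntegral_cantorWeight (hb : 0 < b) {n : ℕ} {s : Finset ℕ} {E : Set ℝ}
    (hs : s ⊆ cantorIndex b k n) (hE : ∀ p ∈ s, adicInterval b n p ⊆ E) :
    ENNReal.ofReal (s.card / (k : ℝ) ^ n) ≤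
      ∫⁻ x in E, ENNReal.ofReal (cantorWeight b k n x) := by
  rw [setLIntegral_cantorWeight]
  calc ENNReal.ofReal (s.card / (k : ℝ) ^ n)
      = ENNReal.ofReal (((b : ℝ) / k) ^ n) * volume (⋃ p ∈ s, adicInterval b n p) := by
        rw [volume_biUnion_adicInterval hb, ← ENNReal.ofReal_mul (by positivity), div_pow]
        congr 1
        field_simp
    _ ≤ ENNReal.ofReal (((b : ℝ) / k) ^ n) * volume (cantorStage b k n ∩ E) := by
        gcongr
        exact iUnion₂_subset fun p hp =>
          subset_inter (adicInterval_subset_cantorStage hb (hs hp)) (hE p hp)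

lemma HLMax_le_mul_of_abs_le {f g : ℝ → ℝ} {A : ℝ} (hfg : ∀ y, |f y| ≤ A * |g y|) (x : ℝ) :
    HLMax f x ≤ ENNReal.ofReal A * HLMax g x := by
  refine iSup_le fun u => iSup_le fun v => iSup_le fun huv => iSup_le fun hx => ?_
  calc (ENNReal.ofReal (v - u))⁻¹ * ∫⁻ y in Ioo u v, ENNReal.ofReal |f y|
      ≤ (ENNReal.ofReal (v - u))⁻¹ *
          ∫⁻ y in Ioo u v, ENNReal.ofReal A * ENNReal.ofReal |g y| := by
        gcongr with y
        rw [← ENNReal.ofReal_mul' (abs_nonneg _)]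
        exact ENNReal.ofReal_le_ofReal (hfg y)
    _ = ENNReal.ofReal A *
          ((ENNReal.ofReal (v - u))⁻¹ * ∫⁻ y in Ioo u v, ENNReal.ofReal |g y|) := by
        rw [lintegral_const_mul' _ _ ENNReal.ofReal_ne_top, mul_left_comm]
    _ ≤ ENNReal.ofReal A * HLMax g x := by
        gcongr
        exact le_iSup₂_of_le u v (le_iSup₂_of_le huv hx le_rfl)

lemma HLMax_cantorWeight_le (hk : 0 < k) (hkb : k ≤ b) {m n : ℕ} (hmn : m ≤ n) {x : ℝ}
    (hx : ∀ y ∈ cantorStage b k n, 1 / (b : ℝ) ^ m < |y - x|) :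
    HLMax (cantorWeight b k n) x ≤ ENNReal.ofReal (3 * ((b : ℝ) / k) ^ m) := by
  obtain ⟨l, rfl⟩ := Nat.exists_eq_add_of_le hmn
  refine iSup_le fun u => iSup_le fun v => iSup_le fun huv => iSup_le fun hxuv => ?_
  simp only [abs_of_nonneg ((isWeight_cantorWeight b k (m + l)).1 _), setLIntegral_cantorWeight]
  rcases lt_or_ge (v - u) (1 / (b : ℝ) ^ m) with hshort | hlong
  · have hempty : cantorStage b k (m + l) ∩ Ioo u v = ∅ := by
      refine eq_empty_of_forall_notMem fun y ⟨hy, hyuv⟩ => (hx y hy).not_ge ?_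
      exact (Real.dist_le_of_mem_Icc (Ioo_subset_Icc_self hyuv) hxuv).trans hshort.le
    simp only [hempty, measure_empty, mul_zero, zero_le]
  · have hlen : 0 < v - u := sub_pos.2 huv
    have hb : (0 : ℝ) < b := by exact_mod_cast hk.trans_le hkb
    calc _ ≤ (ENNReal.ofReal (v - u))⁻¹ * (ENNReal.ofReal (((b : ℝ) / k) ^ (m + l)) *
          ENNReal.ofReal (3 * ((k : ℝ) / b) ^ l * (v - u))) := by
          gcongr
          exact volume_cantorStage_inter_Ioo_le (hk.trans_le hkb) hkb m l hlong
      _ = ENNReal.ofReal (3 * ((b : ℝ) / k) ^ m) := by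
          rw [← ENNReal.ofReal_inv_of_pos hlen, ← ENNReal.ofReal_mul (by positivity),
            ← ENNReal.ofReal_mul (by positivity), pow_add, div_pow, div_pow, div_pow]
          congr 1
          field_simp

lemma abs_cantorWeight_rpow_le {n : ℕ} {r A : ℝ} (hr : 0 < r)
    (hA : (((b : ℝ) / k) ^ n) ^ (r - 1) ≤ A) (x : ℝ) :
    |(|cantorWeight b k n x| ^ r)| ≤ A * |cantorWeight b k n x| := by
  by_cases hx : x ∈ cantorStage b k n
  · have hnonneg : 0 ≤ ((b : ℝ) / k) ^ n := by positivity
    simp only [cantorWeight, hx, indicator_of_mem]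
    rw [abs_of_nonneg (by positivity), abs_of_nonneg hnonneg]
    rcases hnonneg.eq_or_lt with hzero | hpos
    · simp [← hzero, Real.zero_rpow hr.ne']
    · calc (((b : ℝ) / k) ^ n) ^ r = (((b : ℝ) / k) ^ n) ^ (r - 1) * ((b : ℝ) / k) ^ n := by
            rw [← Real.rpow_add_one hpos.ne', sub_add_cancel]
        _ ≤ A * ((b : ℝ) / k) ^ n := by gcongr
  · simp [cantorWeight, hx, Real.zero_rpow hr.ne']

lemma Mr_le_of_HLMax_le {f : ℝ → ℝ} {r x : ℝ} {A : ℝ≥0∞} (hr : 1 ≤ r) (hA : 1 ≤ A)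
    (h : HLMax (fun y => |f y| ^ r) x ≤ A) : Mr r f x ≤ A := by
  calc Mr r f x ≤ A ^ (1 / r) := ENNReal.rpow_le_rpow h (by positivity)
    _ ≤ A ^ (1 : ℝ) :=
        ENNReal.rpow_le_rpow_of_exponent_le hA ((div_le_one (by positivity)).2 hr)
    _ = A := ENNReal.rpow_one A

/-- For `n * (r - 1) ≤ 1`, the power `w ^ r` of the weight `w` is at most `(b / k) * w`, so that
`M_r w` is controlled by `M w`. -/
lemma Mr_cantorWeight_le (hk : 0 < k) (hkb : k ≤ b) {m n : ℕ} (hmn : m ≤ n) {r : ℝ}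
    (hr : 1 ≤ r) (hnr : n * (r - 1) ≤ 1) {x : ℝ}
    (hx : ∀ y ∈ cantorStage b k n, 1 / (b : ℝ) ^ m < |y - x|) :
    Mr r (cantorWeight b k n) x ≤ ENNReal.ofReal (3 * ((b : ℝ) / k) ^ (m + 1)) := by
  have hratio : 1 ≤ (b : ℝ) / k := by
    rw [one_le_div (by positivity)]
    exact_mod_cast hkb
  have hpow : (((b : ℝ) / k) ^ n) ^ (r - 1) ≤ (b : ℝ) / k := by
    rw [← Real.rpow_natCast, ← Real.rpow_mul (by positivity)]
    exact Real.rpow_le_self_of_one_le hratio hnr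
  refine Mr_le_of_HLMax_le hr ?_ ?_
  · rw [ENNReal.one_le_ofReal]
    linarith [one_le_pow₀ (n := m + 1) hratio]
  · calc HLMax (fun y => |cantorWeight b k n y| ^ r) x
        ≤ ENNReal.ofReal ((b : ℝ) / k) * HLMax (cantorWeight b k n) x :=
          HLMax_le_mul_of_abs_le (abs_cantorWeight_rpow_le (by positivity) hpow) x
      _ ≤ ENNReal.ofReal ((b : ℝ) / k) * ENNReal.ofReal (3 * ((b : ℝ) / k) ^ m) := by
          gcongr
          exact HLMax_cantorWeight_le hk hkb hmn hx
      _ = ENNReal.ofReal (3 * ((b : ℝ) / k) ^ (m + 1)) := by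
          rw [← ENNReal.ofReal_mul (by positivity)]
          ring_nf

end CantorWeight

/-- `f` vanishes near `x`, and the integral defining `Hf(x)` converges absolutely to `v`. On such
functions the Hilbert transform is additive, whatever the junk values of `Hil`. -/
def HasHilbert (f : ℝ → ℝ) (x v : ℝ) : Prop :=
  (∀ᶠ y in 𝓝 x, f y = 0) ∧ Integrable (fun y => f y / (x - y)) ∧ ∫ y, f y / (x - y) = v

namespace HasHilbert

variable {f g : ℝ → ℝ} {x v u : ℝ}

lemma hil_eq (h : HasHilbert f x v) : Hil f x = v := by
  obtain ⟨hzero, -, rfl⟩ := h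
  obtain ⟨ε, hε, hball⟩ := Metric.eventually_nhds_iff.1 hzero
  refine Tendsto.limUnder_eq (tendsto_const_nhds.congr' ?_)
  filter_upwards [Ioo_mem_nhdsGT hε] with δ hδ
  refine (setIntegral_eq_integral_of_forall_compl_eq_zero fun y hy => ?_).symm
  have hyx : |x - y| ≤ δ := not_lt.1 hy
  rw [hball (by rw [dist_comm, Real.dist_eq]; exact hyx.trans_lt hδ.2), zero_div]

lemma zero (x : ℝ) : HasHilbert (fun _ => 0) x 0 := by
  simp [HasHilbert]

lemma add (hf : HasHilbert f x v) (hg : HasHilbert g x u) :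
    HasHilbert (fun y => f y + g y) x (v + u) := by
  obtain ⟨hf0, hfi, rfl⟩ := hf
  obtain ⟨hg0, hgi, rfl⟩ := hg
  simp only [HasHilbert, add_div]
  refine ⟨?_, hfi.add hgi, integral_add hfi hgi⟩
  filter_upwards [hf0, hg0] with y hfy hgy
  rw [hfy, hgy, add_zero]

lemma sub (hf : HasHilbert f x v) (hg : HasHilbert g x u) :
    HasHilbert (fun y => f y - g y) x (v - u) := by
  obtain ⟨hf0, hfi, rfl⟩ := hf
  obtain ⟨hg0, hgi, rfl⟩ := hg
  simp only [HasHilbert, sub_div]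
  refine ⟨?_, hfi.sub hgi, integral_sub hfi hgi⟩
  filter_upwards [hf0, hg0] with y hfy hgy
  rw [hfy, hgy, sub_zero]

lemma sum {ι : Type*} {s : Finset ι} {F : ι → ℝ → ℝ} {V : ι → ℝ}
    (h : ∀ i ∈ s, HasHilbert (F i) x (V i)) :
    HasHilbert (fun y => ∑ i ∈ s, F i y) x (∑ i ∈ s, V i) := by
  classical
  induction s using Finset.induction_on with
  | empty => simpa only [Finset.sum_empty] using zero x
  | insert i s hi ih =>
    simp only [Finset.sum_insert hi]
    exact (h i (Finset.mem_insert_self i s)).add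
      (ih fun j hj => h j (Finset.mem_insert_of_mem hj))

end HasHilbert

section HilbertIndicator

lemma hasHilbert_indicator_Ico {a c x : ℝ} (hac : a ≤ c) (hx : x ∉ Icc a c) :
    HasHilbert ((Ico a c).indicator fun _ => 1) x (Real.log ((x - a) / (x - c))) := by
  have hne : ∀ y ∈ Icc a c, x - y ≠ 0 := fun y hy h => hx (sub_eq_zero.1 h ▸ hy)
  have hdiv : (fun y => (Ico a c).indicator (fun _ => (1 : ℝ)) y / (x - y)) =
      (Ico a c).indicator fun y => 1 / (x - y) := by
    funext y
    by_cases hy : y ∈ Ico a c <;> simp [hy]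
  refine ⟨?_, ?_, ?_⟩
  · filter_upwards [isClosed_Icc.isOpen_compl.mem_nhds hx] with y hy
    exact indicator_of_notMem (fun h => hy (Ico_subset_Icc_self h)) _
  · rw [hdiv, integrable_indicator_iff measurableSet_Ico]
    have hcont : ContinuousOn (fun y => 1 / (x - y)) (Icc a c) :=
      continuousOn_const.div (by fun_prop) hne
    exact hcont.integrableOn_Icc.mono_set Ico_subset_Icc_self
  · rw [hdiv, integral_indicator measurableSet_Ico, integral_Ico_eq_integral_Ioo,
      ← integral_Ioc_eq_integral_Ioo, ← intervalIntegral.integral_of_le hac,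
      intervalIntegral.integral_comp_sub_left (fun u => 1 / u) x, integral_one_div]
    rw [uIcc_of_le (by linarith)]
    exact fun h => hx ⟨by linarith [h.2], by linarith [h.1]⟩

lemma hasHilbert_indicator_adicInterval {b m q : ℕ} {x : ℝ} (hb : 0 < b)
    (hx : (b : ℝ) ^ m * x ∉ Icc (q : ℝ) (q + 1)) :
    HasHilbert ((adicInterval b m q).indicator fun _ => 1) x
      (Real.log (((b : ℝ) ^ m * x - q) / ((b : ℝ) ^ m * x - (q + 1)))) := by
  have hbm : (0 : ℝ) < (b : ℝ) ^ m := by positivity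
  have hscale : ((b : ℝ) ^ m * x - q) / ((b : ℝ) ^ m * x - (q + 1)) =
      (x - q / (b : ℝ) ^ m) / (x - (q + 1) / (b : ℝ) ^ m) := by
    rw [sub_div' hbm.ne', sub_div' hbm.ne', div_div_div_cancel_right₀ hbm.ne', mul_comm x]
  rw [hscale]
  refine hasHilbert_indicator_Ico (by gcongr; linarith) ?_
  rwa [mem_Icc, div_le_iff₀ hbm, le_div_iff₀ hbm, mul_comm x]

lemma div_sub_add_one_pos {a t : ℝ} (ht : t ∉ Icc a (a + 1)) : 0 < (t - a) / (t - (a + 1)) := by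
  rcases lt_or_ge t a with h | h
  · exact div_pos_of_neg_of_neg (by linarith) (by linarith)
  · have : a + 1 < t := not_le.1 fun h' => ht ⟨h, h'⟩
    exact div_pos (by linarith) (by linarith)

lemma log_div_sub_add_one_le {a t : ℝ} (ht : t ∉ Icc a (a + 1)) :
    Real.log ((t - a) / (t - (a + 1))) ≤ 1 / (t - (a + 1)) := by
  have hne : t - (a + 1) ≠ 0 := fun h => ht ⟨by linarith, by linarith⟩
  refine (Real.log_le_sub_one_of_pos (div_sub_add_one_pos ht)).trans_eq ?_
  rw [div_sub_one hne]
  ring_nf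

lemma one_div_sub_le_log {a t : ℝ} (ht : t ∉ Icc a (a + 1)) :
    1 / (t - a) ≤ Real.log ((t - a) / (t - (a + 1))) := by
  have hne : t - a ≠ 0 := fun h => ht ⟨by linarith, by linarith⟩
  refine le_trans (le_of_eq ?_) (Real.one_sub_inv_le_log_of_pos (div_sub_add_one_pos ht))
  rw [inv_div, one_sub_div hne]
  ring_nf

end HilbertIndicator

/-- The dipole in the gap of the `q`-th `2k`-adic interval of generation `l`: its children of
generation `l + 1` with last digit `< k` carry the weight, the dipole is `1` on the child with last
digit `k + 1` and `-1` on the child with last digit `2k - 2`. -/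
def dipole (k l q : ℕ) (x : ℝ) : ℝ :=
  (adicInterval (2 * k) (l + 1) (2 * k * q + (k + 1))).indicator (fun _ => 1) x -
    (adicInterval (2 * k) (l + 1) (2 * k * q + (2 * k - 2))).indicator (fun _ => 1) x

/-- The Hilbert transform of a dipole, as a function of the position `t` relative to the left
end of its parent interval, in units of the length of a child. -/
def dipoleHilbert (k : ℕ) (t : ℝ) : ℝ :=
  Real.log ((t - (k + 1)) / (t - (k + 1 + 1))) -
    Real.log ((t - (2 * k - 2)) / (t - (2 * k - 2 + 1)))

/-- A lower bound for the contribution to `-H` of the dipole in the parent of a point, when the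
point lies in the child with last digit `j`. -/
def digitGain (k j : ℕ) : ℝ := 1 / (4 * ((k : ℝ) + 2 - j))

section Dipole

variable {k : ℕ} {t x : ℝ}

lemma hasHilbert_dipole (hk : 4 ≤ k) (l q : ℕ)
    (ht : (2 * k : ℝ) ^ (l + 1) * x - 2 * k * q < k ∨
      2 * k ≤ (2 * k : ℝ) ^ (l + 1) * x - 2 * k * q) :
    HasHilbert (dipole k l q) x (dipoleHilbert k ((2 * k : ℝ) ^ (l + 1) * x - 2 * k * q)) := by
  have hkR : (4 : ℝ) ≤ k := by exact_mod_cast hk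
  have hchild : ∀ i : ℕ, (k : ℝ) ≤ i → (i : ℝ) + 1 < 2 * k →
      HasHilbert ((adicInterval (2 * k) (l + 1) (2 * k * q + i)).indicator fun _ => 1) x
        (Real.log (((2 * k : ℝ) ^ (l + 1) * x - 2 * k * q - i) /
          ((2 * k : ℝ) ^ (l + 1) * x - 2 * k * q - (i + 1)))) := fun i hki hik => by
    convert hasHilbert_indicator_adicInterval (b := 2 * k) (m := l + 1) (q := 2 * k * q + i)
      (x := x) (by omega) ?_ using 3
    · push_cast
      ring
    · push_cast
      ring
    · rintro ⟨h1, h2⟩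
      push_cast at h1 h2
      rcases ht with ht | ht <;> linarith
  have hcast : ((2 * k - 2 : ℕ) : ℝ) = 2 * k - 2 := by
    rw [Nat.cast_sub (by omega)]
    push_cast
    rfl
  have hpos := hchild (k + 1) (by push_cast; linarith) (by push_cast; linarith)
  have hneg := hchild (2 * k - 2) (by rw [hcast]; linarith) (by rw [hcast]; linarith)
  rw [Nat.cast_succ] at hpos
  rw [hcast] at hneg
  exact hpos.sub hneg

lemma dipoleHilbert_le (hk : 4 ≤ k) (ht : t < k ∨ 2 * k ≤ t) :
    dipoleHilbert k t ≤ 1 / (t - (k + 2)) - 1 / (t - (2 * k - 2)) := by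
  have hkR : (4 : ℝ) ≤ k := by exact_mod_cast hk
  have hle := log_div_sub_add_one_le (a := (k : ℝ) + 1) (t := t) fun h => by
    rcases ht with ht | ht <;> linarith [h.1, h.2]
  have hge := one_div_sub_le_log (a := 2 * (k : ℝ) - 2) (t := t) fun h => by
    rcases ht with ht | ht <;> linarith [h.1, h.2]
  rw [add_assoc, one_add_one_eq_two] at hle
  rw [dipoleHilbert, add_assoc (k : ℝ), one_add_one_eq_two]
  linarith

lemma dipoleHilbert_nonpos (hk : 4 ≤ k) (ht : t < k ∨ 2 * k ≤ t) : dipoleHilbert k t ≤ 0 := by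
  have hkR : (4 : ℝ) ≤ k := by exact_mod_cast hk
  refine (dipoleHilbert_le hk ht).trans (sub_nonpos.2 ?_)
  rcases ht with ht | ht
  · exact one_div_le_one_div_of_neg_of_le (by linarith) (by linarith)
  · exact one_div_le_one_div_of_le (by linarith) (by linarith)

lemma dipoleHilbert_le_neg_digitGain (hk : 10 ≤ k) {j : ℕ} (hj : j < k)
    (ht : t ∈ Ico (j : ℝ) (j + 1)) : dipoleHilbert k t ≤ -digitGain k j := by
  have hkR : (10 : ℝ) ≤ k := by exact_mod_cast hk
  have hjk : (j : ℝ) + 1 ≤ k := by exact_mod_cast hj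
  have hd : 0 < (k : ℝ) + 2 - j := by linarith
  have hnear : 1 / ((k : ℝ) + 2 - j) ≤ 1 / (k + 2 - t) :=
    one_div_le_one_div_of_le (by linarith [ht.2]) (by linarith [ht.1])
  have hfar : 1 / (2 * (k : ℝ) - 2 - t) ≤ 3 / (4 * (k + 2 - j)) := by
    rw [div_le_div_iff₀ (by linarith [ht.2]) (by linarith)]
    linarith [ht.2, Nat.cast_nonneg (α := ℝ) j]
  have hsum : 1 / ((k : ℝ) + 2 - j) = digitGain k j + 3 / (4 * (k + 2 - j)) := by
    rw [digitGain]
    field_simp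
    norm_num
  calc dipoleHilbert k t ≤ 1 / (t - (k + 2)) - 1 / (t - (2 * k - 2)) :=
        dipoleHilbert_le (by omega) (Or.inl (by linarith [ht.2]))
    _ = 1 / (2 * (k : ℝ) - 2 - t) - 1 / (k + 2 - t) := by
        rw [← neg_sub ((k : ℝ) + 2), ← neg_sub (2 * (k : ℝ) - 2), one_div_neg_eq_neg_one_div,
          one_div_neg_eq_neg_one_div]
        ring
    _ ≤ -digitGain k j := by linarith

lemma sub_lt_or_le_sub_of_floor_mod_lt {z : ℝ} (hz : 0 ≤ z) (hmod : ⌊z⌋₊ % (2 * k) < k) (q : ℕ) :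
    z - 2 * k * q < k ∨ 2 * k ≤ z - 2 * k * q := by
  have hdiv := Nat.div_add_mod ⌊z⌋₊ (2 * k)
  rcases le_or_gt (⌊z⌋₊ / (2 * k)) q with hq | hq
  · left
    have hlt : ⌊z⌋₊ < 2 * k * q + k := by
      have := Nat.mul_le_mul_left (2 * k) hq
      omega
    have := (Nat.floor_lt hz).1 hlt
    push_cast at this
    linarith
  · right
    have hle : 2 * k * (q + 1) ≤ ⌊z⌋₊ := by
      have := Nat.mul_le_mul_left (2 * k) (Nat.succ_le_of_lt hq)
      rw [Nat.succ_eq_add_one] at this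
      omega
    have := (Nat.le_floor_iff hz).1 hle
    push_cast at this
    linarith

lemma sub_mul_floor_div_mem_Ico {z : ℝ} (hz : 0 ≤ z) :
    z - 2 * k * (⌊z⌋₊ / (2 * k) : ℕ) ∈
      Ico ((⌊z⌋₊ % (2 * k) : ℕ) : ℝ) ((⌊z⌋₊ % (2 * k) : ℕ) + 1) := by
  have hdiv : 2 * k * ((⌊z⌋₊ / (2 * k) : ℕ) : ℝ) + (⌊z⌋₊ % (2 * k) : ℕ) = ⌊z⌋₊ := by
    exact_mod_cast Nat.div_add_mod ⌊z⌋₊ (2 * k)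
  constructor <;> linarith [Nat.floor_le hz, Nat.lt_floor_add_one z]

/-- All dipoles of one generation pull in the same direction, so only the nearest one is kept. -/
lemma sum_dipoleHilbert_le (hk : 10 ≤ k) {l : ℕ} {z : ℝ} (hz : 0 ≤ z)
    (hzl : ⌊z⌋₊ ∈ cantorIndex (2 * k) k (l + 1)) :
    ∑ q ∈ cantorIndex (2 * k) k l, dipoleHilbert k (z - 2 * k * q) ≤
      -digitGain k (⌊z⌋₊ % (2 * k)) := by
  obtain ⟨hparent, hdigit⟩ := (mem_cantorIndex_succ (by omega)).1 hzl
  have hneg : ∀ q : ℕ, 0 ≤ -dipoleHilbert k (z - 2 * k * q) := fun q =>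
    neg_nonneg.2 (dipoleHilbert_nonpos (by omega) (sub_lt_or_le_sub_of_floor_mod_lt hz hdigit q))
  have hnearest := Finset.single_le_sum (fun q _ => hneg q) hparent
  rw [Finset.sum_neg_distrib] at hnearest
  linarith [dipoleHilbert_le_neg_digitGain hk hdigit (sub_mul_floor_div_mem_Ico hz)]

lemma measurable_dipole (k l q : ℕ) : Measurable (dipole k l q) := by
  unfold dipole
  fun_prop (disch := exact measurableSet_adicInterval)

lemma lintegral_enorm_dipole_le (k l q : ℕ) :
    ∫⁻ x, ‖dipole k l q x‖ₑ ≤ ENNReal.ofReal (2 / (2 * k : ℝ) ^ (l + 1)) := by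
  have hchild : ∀ p, ∫⁻ x, ‖(adicInterval (2 * k) (l + 1) p).indicator (fun _ => (1 : ℝ)) x‖ₑ =
      ENNReal.ofReal (1 / (2 * k : ℝ) ^ (l + 1)) := fun p => by
    simp only [enorm_indicator_eq_indicator_enorm, enorm_one,
      lintegral_indicator_const measurableSet_adicInterval, one_mul, volume_adicInterval]
    push_cast
    rfl
  calc ∫⁻ x, ‖dipole k l q x‖ₑ
      ≤ ∫⁻ x, ‖(adicInterval (2 * k) (l + 1) (2 * k * q + (k + 1))).indicator
            (fun _ => (1 : ℝ)) x‖ₑ +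
          ‖(adicInterval (2 * k) (l + 1) (2 * k * q + (2 * k - 2))).indicator
            (fun _ => (1 : ℝ)) x‖ₑ := lintegral_mono fun x => enorm_sub_le
    _ = ENNReal.ofReal (2 / (2 * k : ℝ) ^ (l + 1)) := by
        rw [lintegral_add_left (by fun_prop (disch := exact measurableSet_adicInterval)), hchild,
          hchild, ← ENNReal.ofReal_add (by positivity) (by positivity)]
        ring_nf

lemma enorm_dipole_mul_Mr_le (hk : 4 ≤ k) {N l : ℕ} (hl : l < N) {r : ℝ} (hr : 1 ≤ r)
    (hNr : N * (r - 1) ≤ 1) (q : ℕ) (x : ℝ) :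
    ‖dipole k l q x‖ₑ * Mr r (cantorWeight (2 * k) k N) x ≤
      ENNReal.ofReal (3 * 2 ^ (l + 2)) * ‖dipole k l q x‖ₑ := by
  rcases eq_or_ne (dipole k l q x) 0 with hzero | hne
  · simp only [hzero, enorm_zero, zero_mul, mul_zero, le_refl]
  have hchild : ∃ i, k < i ∧ i + 2 ≤ 2 * k ∧
      x ∈ adicInterval (2 * k) (l + 1) (2 * k * q + i) := by
    by_contra! hout
    refine hne ?_
    rw [dipole, indicator_of_notMem (hout (k + 1) (by omega) (by omega)),
      indicator_of_notMem (hout (2 * k - 2) (by omega) (by omega)), sub_zero]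
  obtain ⟨i, hki, hik, hxi⟩ := hchild
  have hratio : ((2 * k : ℕ) : ℝ) / k = 2 := by
    push_cast
    field_simp
  have hMr := Mr_cantorWeight_le (by omega) (by omega : k ≤ 2 * k) hl hr hNr
    fun y hy => one_div_pow_lt_abs_sub hki hik hl hxi hy
  rw [hratio] at hMr
  rw [mul_comm]
  gcongr

end Dipole

/-- The function whose Hilbert transform is large on most of the `N`-th Cantor stage. -/
def dipoleSum (k N : ℕ) (x : ℝ) : ℝ :=
  ∑ l ∈ Finset.range N, ∑ q ∈ cantorIndex (2 * k) k l, dipole k l q x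

section DipoleSum

variable {k : ℕ} {x : ℝ}

lemma hasHilbert_dipoleSum (hk : 4 ≤ k) {N : ℕ} (hx : x ∈ cantorStage (2 * k) k N) :
    HasHilbert (dipoleSum k N) x (∑ l ∈ Finset.range N, ∑ q ∈ cantorIndex (2 * k) k l,
      dipoleHilbert k (((2 * k : ℕ) : ℝ) ^ (l + 1) * x - 2 * k * q)) := by
  refine HasHilbert.sum fun l hl => HasHilbert.sum fun q _ => ?_
  have hfloor := floor_mem_cantorIndex (by omega) (Finset.mem_range.1 hl) hx
  have hposition := sub_lt_or_le_sub_of_floor_mod_lt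
    (mul_nonneg (by positivity) hx.1) ((mem_cantorIndex_succ (by omega)).1 hfloor).2 q
  push_cast at hposition ⊢
  exact hasHilbert_dipole hk l q hposition

lemma hil_dipoleSum_le (hk : 10 ≤ k) {N : ℕ} (hx : x ∈ cantorStage (2 * k) k N) :
    Hil (dipoleSum k N) x ≤ -∑ i ∈ Finset.range N,
      digitGain k (⌊((2 * k : ℕ) : ℝ) ^ N * x⌋₊ / (2 * k) ^ i % (2 * k)) := by
  rw [(hasHilbert_dipoleSum (by omega) hx).hil_eq, ← Finset.sum_range_reflect,
    ← Finset.sum_neg_distrib]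
  refine Finset.sum_le_sum fun i hi => ?_
  have hiN := Finset.mem_range.1 hi
  have hlevel : N - 1 - i + 1 + i = N := by omega
  have hgeneration := sum_dipoleHilbert_le hk (mul_nonneg (by positivity) hx.1)
    (floor_mem_cantorIndex (m := N - 1 - i + 1) (by omega) (by omega) hx)
  rwa [floor_pow_mul_eq_div (by omega) _ i, hlevel] at hgeneration

lemma ofReal_abs_dipoleSum_mul_Mr_le (hk : 4 ≤ k) {N : ℕ} {r : ℝ} (hr : 1 ≤ r)
    (hNr : N * (r - 1) ≤ 1) (x : ℝ) :
    ENNReal.ofReal |dipoleSum k N x| * Mr r (cantorWeight (2 * k) k N) x ≤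
      ∑ l ∈ Finset.range N, ∑ q ∈ cantorIndex (2 * k) k l,
        ENNReal.ofReal (3 * 2 ^ (l + 2)) * ‖dipole k l q x‖ₑ := by
  calc ENNReal.ofReal |dipoleSum k N x| * Mr r (cantorWeight (2 * k) k N) x
      ≤ (∑ l ∈ Finset.range N, ∑ q ∈ cantorIndex (2 * k) k l, ‖dipole k l q x‖ₑ) *
          Mr r (cantorWeight (2 * k) k N) x := by
        rw [← Real.enorm_eq_ofReal_abs]
        gcongr
        exact (enorm_sum_le _ _).trans (Finset.sum_le_sum fun l _ => enorm_sum_le _ _)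
    _ ≤ _ := by
        simp only [Finset.sum_mul]
        exact Finset.sum_le_sum fun l hl => Finset.sum_le_sum fun q _ =>
          enorm_dipole_mul_Mr_le hk (Finset.mem_range.1 hl) hr hNr q x

lemma lintegral_dipoleSum_mul_Mr_le (hk : 4 ≤ k) {N : ℕ} {r : ℝ} (hr : 1 ≤ r)
    (hNr : N * (r - 1) ≤ 1) :
    ∫⁻ x, ENNReal.ofReal |dipoleSum k N x| * Mr r (cantorWeight (2 * k) k N) x ≤
      ENNReal.ofReal (12 * N / k) := by
  have hmeas : ∀ l q, Measurable fun x => ENNReal.ofReal (3 * 2 ^ (l + 2)) * ‖dipole k l q x‖ₑ :=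
    fun l q => (measurable_dipole k l q).enorm.const_mul _
  calc ∫⁻ x, ENNReal.ofReal |dipoleSum k N x| * Mr r (cantorWeight (2 * k) k N) x
      ≤ ∫⁻ x, ∑ l ∈ Finset.range N, ∑ q ∈ cantorIndex (2 * k) k l,
          ENNReal.ofReal (3 * 2 ^ (l + 2)) * ‖dipole k l q x‖ₑ :=
        lintegral_mono fun x => ofReal_abs_dipoleSum_mul_Mr_le hk hr hNr x
    _ = ∑ l ∈ Finset.range N, ∑ q ∈ cantorIndex (2 * k) k l,
          ENNReal.ofReal (3 * 2 ^ (l + 2)) * ∫⁻ x, ‖dipole k l q x‖ₑ := by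
        rw [lintegral_finsetSum _ fun l _ => Finset.measurable_fun_sum _ fun q _ => hmeas l q]
        refine Finset.sum_congr rfl fun l _ => ?_
        rw [lintegral_finsetSum _ fun q _ => hmeas l q]
        exact Finset.sum_congr rfl fun q _ => lintegral_const_mul' _ _ ENNReal.ofReal_ne_top
    _ ≤ ∑ l ∈ Finset.range N, ∑ _q ∈ cantorIndex (2 * k) k l,
          ENNReal.ofReal (3 * 2 ^ (l + 2)) * ENNReal.ofReal (2 / (2 * k : ℝ) ^ (l + 1)) := by
        gcongr
        exact lintegral_enorm_dipole_le k _ _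
    _ = ∑ _l ∈ Finset.range N, ENNReal.ofReal (12 / k) := by
        refine Finset.sum_congr rfl fun l _ => ?_
        rw [Finset.sum_const, card_cantorIndex (by omega), nsmul_eq_mul,
          ← ENNReal.ofReal_natCast, ← ENNReal.ofReal_mul (by positivity),
          ← ENNReal.ofReal_mul (by positivity)]
        congr 1
        push_cast
        field_simp
        ring
    _ = ENNReal.ofReal (12 * N / k) := by
        rw [Finset.sum_const, Finset.card_range, nsmul_eq_mul, ← ENNReal.ofReal_natCast,
          ← ENNReal.ofReal_mul (by positivity)]
        ring_nf

lemma digitGain_mem_Icc {j : ℕ} (hj : j < k) : digitGain k j ∈ Icc 0 1 := by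
  have hjk : (j : ℝ) + 1 ≤ k := by exact_mod_cast hj
  rw [digitGain]
  exact ⟨one_div_nonneg.2 (by linarith), by rw [div_le_one] <;> linarith⟩

lemma log_sub_le_sum_digitGain (k : ℕ) :
    (Real.log (k + 3) - 3 / 2) / 4 ≤ ∑ j ∈ Finset.range k, digitGain k j := by
  have hharmonic : (harmonic (k + 2) : ℝ) = ∑ j ∈ Finset.range k, ((j : ℝ) + 3)⁻¹ + 3 / 2 := by
    rw [harmonic, Finset.sum_range_succ', Finset.sum_range_succ']
    push_cast
    norm_num [add_assoc]
  have hlog := log_add_one_le_harmonic (k + 2)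
  push_cast at hlog
  rw [hharmonic, add_assoc, two_add_one_eq_three] at hlog
  calc (Real.log (k + 3) - 3 / 2) / 4 ≤ ∑ j ∈ Finset.range k, ((j : ℝ) + 3)⁻¹ / 4 := by
        rw [← Finset.sum_div]
        linarith
    _ = ∑ j ∈ Finset.range k, digitGain k (k - 1 - j) := by
        refine Finset.sum_congr rfl fun j hj => ?_
        have hcast : ((k - 1 - j : ℕ) : ℝ) = k - 1 - j := by
          have := Finset.mem_range.1 hj
          rw [Nat.cast_sub (by omega), Nat.cast_sub (by omega), Nat.cast_one]
        rw [digitGain, hcast, one_div, mul_inv, div_eq_inv_mul]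
        ring_nf
    _ = ∑ j ∈ Finset.range k, digitGain k j := Finset.sum_range_reflect _ k

lemma one_half_le_setLIntegral_cantorWeight (hk : 10 ≤ k)
    (hgain : 4 ≤ ∑ j ∈ Finset.range k, digitGain k j) {lam : ℝ}
    (hlam : lam ≤ (∑ j ∈ Finset.range k, digitGain k j) / 4) :
    ENNReal.ofReal (1 / 2) ≤
      ∫⁻ x in {x | lam < |Hil (dipoleSum k k) x|},
        ENNReal.ofReal (cantorWeight (2 * k) k k x) := by
  have hkpos : (0 : ℝ) < k := by exact_mod_cast (by omega : 0 < k)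
  have hthreshold : k * (∑ j ∈ Finset.range k, digitGain k j) / (4 * k) =
      (∑ j ∈ Finset.range k, digitGain k j) / 4 := by
    rw [mul_comm, mul_div_mul_right _ _ hkpos.ne']
  have hmost := half_pow_le_card_filter_lt_sum_digit (b := 2 * k) (k := k) (n := k) (by omega)
    (by omega) (fun j hj => digitGain_mem_Icc hj) (by linarith)
  rw [hthreshold, div_eq_mul_one_div, mul_comm, ← le_div_iff₀ (by positivity)] at hmost
  refine (ENNReal.ofReal_le_ofReal hmost).trans
    (card_div_pow_le_setLIntegral_cantorWeight (b := 2 * k) (by omega) (Finset.filter_subset _ _)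
      fun p hp x hx => ?_)
  obtain ⟨hpC, hp⟩ := Finset.mem_filter.1 hp
  obtain ⟨hx0, hfloor⟩ := (mem_adicInterval_iff_floor_eq (by omega)).1 hx
  have hHil := hil_dipoleSum_le hk ⟨hx0, hfloor ▸ hpC⟩
  rw [hfloor] at hHil
  refine mem_ofPred.2 (lt_abs.2 (Or.inr ?_))
  linarith

lemma ten_le_of_twenty_le_log (hk : 20 ≤ Real.log (k + 3)) : 10 ≤ k := by
  have := Real.log_le_sub_one_of_pos (x := (k : ℝ) + 3) (by positivity)
  exact_mod_cast (by linarith : (10 : ℝ) ≤ k)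

lemma log_mul_lintegral_dipoleSum_lt (hk : 20 ≤ Real.log (k + 3)) {r : ℝ} (hr : 1 ≤ r)
    (hkr : k * (r - 1) ≤ 1) :
    ENNReal.ofReal (Real.log (k + 3) / 1000) *
        ∫⁻ x, ENNReal.ofReal |dipoleSum k k x| * Mr r (cantorWeight (2 * k) k k) x <
      ENNReal.ofReal (Real.log (k + 3) / 20) *
        ∫⁻ x in {x | Real.log (k + 3) / 20 < |Hil (dipoleSum k k) x|},
          ENNReal.ofReal (cantorWeight (2 * k) k k x) := by
  have hk10 := ten_le_of_twenty_le_log hk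
  have hkpos : (0 : ℝ) < k := by exact_mod_cast (by omega : 0 < k)
  have hgain := log_sub_le_sum_digitGain k
  calc _ ≤ ENNReal.ofReal (Real.log (k + 3) / 1000) * ENNReal.ofReal (12 * k / k) := by
        gcongr
        exact lintegral_dipoleSum_mul_Mr_le (by omega) hr hkr
    _ < ENNReal.ofReal (Real.log (k + 3) / 20) * ENNReal.ofReal (1 / 2) := by
        rw [← ENNReal.ofReal_mul (by positivity), ← ENNReal.ofReal_mul (by positivity),
          mul_div_cancel_right₀ _ hkpos.ne', ENNReal.ofReal_lt_ofReal_iff (by positivity)]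
        linarith
    _ ≤ _ := by
        gcongr
        exact one_half_le_setLIntegral_cantorWeight hk10 (by linarith) (by linarith)

end DipoleSum

lemma tendsto_div_sub_one_atTop : Tendsto (fun r : ℝ => r / (r - 1)) (𝓝[>] 1) atTop := by
  have hsub : Tendsto (fun r : ℝ => r - 1) (𝓝[>] 1) (𝓝[>] 0) := by
    refine tendsto_nhdsWithin_iff.2 ⟨?_, ?_⟩
    · simpa using ((continuous_sub_right (1 : ℝ)).tendsto 1).mono_left nhdsWithin_le_nhds
    · filter_upwards [self_mem_nhdsWithin] with r hr using sub_pos.2 (mem_Ioi.1 hr)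
  exact (tendsto_id.mono_left nhdsWithin_le_nhds).pos_mul_atTop one_pos
    (tendsto_inv_nhdsGT_zero.comp hsub)

theorem eventually_exists_log_mul_lintegral_lt :
    ∀ᶠ r in 𝓝[>] (1 : ℝ), ∃ (w f : ℝ → ℝ) (lam : ℝ), IsWeight w ∧
      (∫⁻ x, ENNReal.ofReal |f x| * Mr r w x) < ⊤ ∧ 0 < lam ∧
      ENNReal.ofReal (Real.log (r / (r - 1)) / 1000) *
          (∫⁻ x, ENNReal.ofReal |f x| * Mr r w x) <
        ENNReal.ofReal lam * ∫⁻ x in {x : ℝ | lam < |Hil f x|}, ENNReal.ofReal (w x) := by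
  have hlarge := tendsto_div_sub_one_atTop.eventually_ge_atTop (Real.exp 20)
  filter_upwards [self_mem_nhdsWithin, hlarge] with r (hr : 1 < r) hr20
  have hr1 : 0 < r - 1 := sub_pos.2 hr
  set k := ⌊1 / (r - 1)⌋₊
  have hkr : k * (r - 1) ≤ 1 := (le_div_iff₀ hr1).1 (Nat.floor_le (by positivity))
  have hrk : r / (r - 1) ≤ k + 3 := by
    rw [show r / (r - 1) = 1 / (r - 1) + 1 by field_simp; ring]
    linarith [Nat.lt_floor_add_one (1 / (r - 1))]
  have hk20 : 20 ≤ Real.log (k + 3) := by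
    rw [Real.le_log_iff_exp_le (by positivity)]
    linarith
  have hk4 : 4 ≤ k := le_trans (by norm_num) (ten_le_of_twenty_le_log hk20)
  refine ⟨cantorWeight (2 * k) k k, dipoleSum k k, Real.log (k + 3) / 20,
    isWeight_cantorWeight _ _ _,
    (lintegral_dipoleSum_mul_Mr_le hk4 hr.le hkr).trans_lt ENNReal.ofReal_lt_top,
    by positivity, lt_of_le_of_lt ?_ (log_mul_lintegral_dipoleSum_lt hk20 hr.le hkr)⟩
  gcongr ENNReal.ofReal (?_ / 1000) * _
  exact Real.log_le_log (div_pos (by linarith) hr1) hrk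

theorem statement13_general (φ : ℝ → ℝ)
    (hlim : Tendsto (fun t => φ t / Real.log t) atTop (𝓝 0)) (c : ℝ) :
    ∀ᶠ r in 𝓝[>] (1 : ℝ), ∃ (w f : ℝ → ℝ) (lam : ℝ), IsWeight w ∧
      (∫⁻ x, ENNReal.ofReal |f x| * Mr r w x) < ⊤ ∧ 0 < lam ∧
      ENNReal.ofReal (c * φ (r / (r - 1))) *
          (∫⁻ x, ENNReal.ofReal |f x| * Mr r w x) <
        ENNReal.ofReal lam * ∫⁻ x in {x : ℝ | lam < |Hil f x|}, ENNReal.ofReal (w x) := by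
  have hφ : ∀ᶠ t in atTop, c * φ t ≤ Real.log t / 1000 := by
    have hsmall := (hlim.const_mul c).eventually_le_const (u := 1 / 1000) (by norm_num)
    filter_upwards [hsmall, eventually_gt_atTop 1] with t ht ht1
    rw [← mul_div_assoc, div_le_iff₀ (Real.log_pos ht1)] at ht
    linarith
  filter_upwards [eventually_exists_log_mul_lintegral_lt,
    tendsto_div_sub_one_atTop.eventually hφ] with r ⟨w, f, lam, hw, hfin, hlam, hlt⟩ hr
  refine ⟨w, f, lam, hw, hfin, hlam, lt_of_le_of_lt ?_ hlt⟩
  gcongr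

/-- **Remark 4.2.** If `φ : (1,∞) → (0,∞)` is increasing with
`φ(t)/log t → 0`, then for every `c > 0` there are `r ∈ (1,2)`, a weight `w`,
a function `f` with `∫ |f| M_r w < ∞`, and `λ > 0` such that
`λ w({|Hf| > λ}) > c φ(r') ∫ |f| M_r w`, where `r' = r/(r−1)`. -/
theorem statement13 (φ : ℝ → ℝ)
    (hmono : ∀ s t : ℝ, 1 < s → s ≤ t → φ s ≤ φ t)
    (hpos : ∀ t : ℝ, 1 < t → 0 < φ t)
    (hlim : Tendsto (fun t => φ t / Real.log t) atTop (𝓝 0))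
    (c : ℝ) (hc : 0 < c) :
    ∃ (r : ℝ) (w f : ℝ → ℝ) (lam : ℝ), 1 < r ∧ r < 2 ∧ IsWeight w ∧
      (∫⁻ x, ENNReal.ofReal |f x| * Mr r w x) < ⊤ ∧ 0 < lam ∧
      ENNReal.ofReal (c * φ (r / (r - 1))) *
          (∫⁻ x, ENNReal.ofReal |f x| * Mr r w x)
        < ENNReal.ofReal lam *
            ∫⁻ x in {x : ℝ | lam < |Hil f x|}, ENNReal.ofReal (w x) := by
  obtain ⟨r, ⟨w, f, lam, h⟩, hr⟩ :=
    ((statement13_general φ hlim c).and (Ioo_mem_nhdsGT one_lt_two)).exists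
  exact ⟨r, w, f, lam, hr.1, hr.2, h⟩

end RT

end
end

section
/- Let φ : [1,∞) → (0,∞) be a bounded function and define Φ(t) = t·log log(e^e + t)·φ(t) for t ≥ 1. Then for every δ ∈ (0,1) there is a constant c > 0, depending only on δ and on sup φ, such that for every r ∈ (1,2), with r' = r/(r−1): sup_{t ≥ 1} Φ(t)^{1/r}/t ≤ c·( (log r')^{δ/r} + (log r')^{1/r} · sup_{t ≥ exp(exp((log r')^δ))} φ(t)^{1/r} ). -/
open MeasureTheory Set Filter Topology
open scoped ENNReal

noncomputable section

namespace RT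

/-!
Write `L = log r'` and `Q t = log log (e^e + t)`, so that `1 ≤ Q` and `Q t ≤ 2 + log log t` for
`t ≥ e`. Since `t^{1/r} ≤ t`, for `t ≤ exp (exp (L^δ))` the quantity `(t Q t)^{1/r} / t` is at most
`(2 + L^δ)^{1/r}`. For larger `t` the inequality `log x ≤ x - 1` at `x = (r - 1) log t` gives
`Q t ≤ 1 + L + (r - 1) log t ≤ (1 + L) t^{r-1}`, hence `(t Q t)^{1/r} / t ≤ (1 + L)^{1/r}`. The
additive constants are absorbed because `L ≥ 1/r`, which keeps `L^{δ/r}` above `e^{-δ}`.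
-/

section

open Real

variable {r δ t : ℝ}

/-- The double logarithm `log log (e^e + t)` in the definition of `Φ`; the shift by `e^e` makes it
at least `1` on `[0, ∞)`. -/
def shiftedLogLog (t : ℝ) : ℝ := log (log (exp (exp 1) + t))

lemma monotoneOn_shiftedLogLog : MonotoneOn shiftedLogLog (Ici 0) := by
  intro s hs t _ hst
  have hs : 0 ≤ s := hs
  have : 1 < exp (exp 1) := one_lt_exp_iff.2 (exp_pos 1)
  have : 0 < log (exp (exp 1) + s) := log_pos (by linarith)
  unfold shiftedLogLog
  gcongr

lemma one_le_shiftedLogLog (ht : 0 ≤ t) : 1 ≤ shiftedLogLog t := by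
  simpa [shiftedLogLog] using monotoneOn_shiftedLogLog self_mem_Ici ht ht

lemma shiftedLogLog_le_two_add_log_log (ht : exp 1 ≤ t) : shiftedLogLog t ≤ 2 + log (log t) := by
  have he : 2 ≤ exp 1 := exp_one_gt_two.le
  have hee : 2 ≤ exp (exp 1) := by linarith [add_one_le_exp (exp 1)]
  have ht0 : 0 < t := (exp_pos 1).trans_le ht
  have hlog : 1 ≤ log t := (le_log_iff_exp_le ht0).2 ht
  have hinner : log (exp (exp 1) + t) ≤ exp 2 * log t := calc
    log (exp (exp 1) + t) ≤ log (exp (exp 1) * t) := by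
      gcongr
      exact add_le_mul hee (he.trans ht)
    _ = exp 1 + log t := by rw [log_mul (exp_ne_zero _) ht0.ne', log_exp]
    _ ≤ exp 1 * log t + exp 1 * log t := by nlinarith
    _ ≤ exp 1 * exp 1 * log t := by
        rw [← two_mul, ← mul_assoc]
        gcongr
    _ = exp 2 * log t := by rw [← exp_add]; norm_num
  calc shiftedLogLog t ≤ log (exp 2 * log t) :=
        log_le_log (log_pos (by linarith)) hinner
    _ = 2 + log (log t) := by rw [log_mul (exp_ne_zero _) (by positivity), log_exp]

lemma one_div_le_log_conjExponent (hr : 1 < r) : 1 / r ≤ log (conjExponent r) := by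
  have hr' : 0 < r - 1 := sub_pos.2 hr
  calc 1 / r = 1 - (conjExponent r)⁻¹ := by unfold conjExponent; field_simp; ring
    _ ≤ log (conjExponent r) := one_sub_inv_le_log_of_pos (div_pos (by linarith) hr')

lemma log_conjExponent_pos (hr : 1 < r) : 0 < log (conjExponent r) :=
  (one_div_pos.2 (by linarith)).trans_le (one_div_le_log_conjExponent hr)

lemma exp_neg_le_rpow {x s a : ℝ} (hx : 0 < x) (hs : 0 ≤ s) (hsx : s ≤ a * x) :
    exp (-a) ≤ x ^ s := by
  have hlog : -x⁻¹ ≤ log x := by linarith [one_sub_inv_le_log_of_pos hx]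
  rw [rpow_def_of_pos hx, exp_le_exp]
  calc -a ≤ -x⁻¹ * s := by
        rw [neg_mul, neg_le_neg_iff, inv_mul_le_iff₀ hx, mul_comm]
        exact hsx
    _ ≤ log x * s := by gcongr

lemma exp_neg_le_log_conjExponent_rpow (hr : 1 < r) (hδ : 0 ≤ δ) :
    exp (-δ) ≤ log (conjExponent r) ^ (δ / r) := by
  refine exp_neg_le_rpow (log_conjExponent_pos hr) (by positivity) ?_
  rw [div_eq_mul_one_div]
  gcongr
  exact one_div_le_log_conjExponent hr

lemma add_log_conjExponent_rpow_le {a : ℝ} (hr : 1 < r) (hδ : 0 ≤ δ) (ha : 1 ≤ a) :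
    (a + log (conjExponent r) ^ δ) ^ (1 / r) ≤
      (1 + a * exp δ) * log (conjExponent r) ^ (δ / r) := by
  have hL := log_conjExponent_pos hr
  set L := log (conjExponent r)
  have hr1 : 1 / r ≤ 1 := (div_le_one (by linarith)).2 hr.le
  have hone : 1 ≤ exp δ * L ^ (δ / r) := calc
    1 = exp δ * exp (-δ) := by rw [← exp_add, add_neg_cancel, exp_zero]
    _ ≤ exp δ * L ^ (δ / r) := by gcongr; exact exp_neg_le_log_conjExponent_rpow hr hδ
  calc (a + L ^ δ) ^ (1 / r) ≤ a ^ (1 / r) + (L ^ δ) ^ (1 / r) :=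
        rpow_add_le_add_rpow (by positivity) (by positivity) (by positivity) hr1
    _ ≤ a + L ^ (δ / r) := by
        rw [← rpow_mul hL.le, mul_one_div]
        gcongr
        exact rpow_le_self_of_one_le ha hr1
    _ ≤ a * (exp δ * L ^ (δ / r)) + L ^ (δ / r) := by
        gcongr
        exact le_mul_of_one_le_right (by linarith) hone
    _ = (1 + a * exp δ) * L ^ (δ / r) := by ring

lemma log_le_mul_add_log_conjExponent {u : ℝ} (hr : 1 < r) (hu : 0 < u) :
    log u ≤ (r - 1) * u + log (conjExponent r) - 1 := by
  have hr' : 0 < r - 1 := sub_pos.2 hr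
  have hconj : log (conjExponent r) = log r - log (r - 1) := log_div (by linarith) hr'.ne'
  have hlin : log (r - 1) + log u ≤ (r - 1) * u - 1 := by
    rw [← log_mul hr'.ne' hu.ne']
    exact log_le_sub_one_of_pos (by positivity)
  linarith [log_pos hr]

lemma shiftedLogLog_le_mul_rpow (hr : 1 < r) (ht : exp 1 ≤ t) :
    shiftedLogLog t ≤ (1 + log (conjExponent r)) * t ^ (r - 1) := by
  have ht0 : 0 < t := (exp_pos 1).trans_le ht
  have hlog : 1 ≤ log t := (le_log_iff_exp_le ht0).2 ht
  have hL := log_conjExponent_pos hr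
  have hpow : 1 + (r - 1) * log t ≤ t ^ (r - 1) := by
    rw [rpow_def_of_pos ht0, mul_comm, add_comm]
    exact add_one_le_exp _
  have hnonneg : 0 ≤ (r - 1) * log t := mul_nonneg (by linarith) (by linarith)
  calc shiftedLogLog t ≤ 2 + log (log t) := shiftedLogLog_le_two_add_log_log ht
    _ ≤ 1 + log (conjExponent r) + (r - 1) * log t := by
        linarith [log_le_mul_add_log_conjExponent hr (zero_lt_one.trans_le hlog)]
    _ ≤ (1 + log (conjExponent r)) * (1 + (r - 1) * log t) := by nlinarith
    _ ≤ (1 + log (conjExponent r)) * t ^ (r - 1) := by gcongr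

lemma mul_shiftedLogLog_rpow_div_le_of_le (hr : 1 < r) (hδ : 0 ≤ δ) (ht : 1 ≤ t)
    (htT : t ≤ exp (exp (log (conjExponent r) ^ δ))) :
    (t * shiftedLogLog t) ^ (1 / r) / t ≤
      (1 + 2 * exp δ) * log (conjExponent r) ^ (δ / r) := by
  have hL := log_conjExponent_pos hr
  have ht0 : 0 < t := by linarith
  have hQ0 : 0 ≤ shiftedLogLog t := zero_le_one.trans (one_le_shiftedLogLog ht0.le)
  have hQ : shiftedLogLog t ≤ 2 + log (conjExponent r) ^ δ := calc
    shiftedLogLog t ≤ shiftedLogLog (exp (exp (log (conjExponent r) ^ δ))) :=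
      monotoneOn_shiftedLogLog ht0.le (exp_pos _).le htT
    _ ≤ 2 + log (log (exp (exp (log (conjExponent r) ^ δ)))) :=
      shiftedLogLog_le_two_add_log_log (exp_le_exp.2 (one_le_exp (by positivity)))
    _ = 2 + log (conjExponent r) ^ δ := by rw [log_exp, log_exp]
  rw [div_le_iff₀ ht0]
  calc (t * shiftedLogLog t) ^ (1 / r)
      = shiftedLogLog t ^ (1 / r) * t ^ (1 / r) := by rw [mul_rpow ht0.le hQ0, mul_comm]
    _ ≤ (2 + log (conjExponent r) ^ δ) ^ (1 / r) * t := by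
        gcongr
        exact rpow_le_self_of_one_le ht ((div_le_one (by linarith)).2 hr.le)
    _ ≤ (1 + 2 * exp δ) * log (conjExponent r) ^ (δ / r) * t := by
        gcongr
        exact add_log_conjExponent_rpow_le hr hδ one_le_two

lemma mul_shiftedLogLog_rpow_div_le (hr : 1 < r) (ht : exp 1 ≤ t) :
    (t * shiftedLogLog t) ^ (1 / r) / t ≤ (1 + exp 1) * log (conjExponent r) ^ (1 / r) := by
  have hL := log_conjExponent_pos hr
  have ht0 : 0 < t := (exp_pos 1).trans_le ht
  have hQ0 : 0 ≤ shiftedLogLog t := zero_le_one.trans (one_le_shiftedLogLog ht0.le)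
  have hbase : t * shiftedLogLog t ≤ (1 + log (conjExponent r)) * t ^ r := calc
    t * shiftedLogLog t ≤ t * ((1 + log (conjExponent r)) * t ^ (r - 1)) := by
      gcongr
      exact shiftedLogLog_le_mul_rpow hr ht
    _ = (1 + log (conjExponent r)) * t ^ r := by rw [rpow_sub_one ht0.ne']; field_simp
  rw [div_le_iff₀ ht0]
  calc (t * shiftedLogLog t) ^ (1 / r)
      ≤ ((1 + log (conjExponent r)) * t ^ r) ^ (1 / r) := by gcongr
    _ = (1 + log (conjExponent r)) ^ (1 / r) * t := by
        rw [mul_rpow (by positivity) (by positivity), one_div,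
          rpow_rpow_inv ht0.le (by linarith)]
    _ ≤ (1 + exp 1) * log (conjExponent r) ^ (1 / r) * t := by
        gcongr
        simpa using add_log_conjExponent_rpow_le hr zero_le_one le_rfl

lemma rpow_one_div_le_max_one {x B : ℝ} (hr : 1 ≤ r) (hx : 0 ≤ x) (hxB : x ≤ B) :
    x ^ (1 / r) ≤ max B 1 := calc
  x ^ (1 / r) ≤ max B 1 ^ (1 / r) := by gcongr; exact hxB.trans (le_max_left B 1)
  _ ≤ max B 1 := rpow_le_self_of_one_le (le_max_right B 1) ((div_le_one (by linarith)).2 hr)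

lemma mul_shiftedLogLog_mul_rpow_div_le {φ : ℝ → ℝ} {B : ℝ} (hδ : 0 ≤ δ)
    (hφ : ∀ t, 1 ≤ t → 0 ≤ φ t) (hφB : ∀ t, 1 ≤ t → φ t ≤ B) (hr : 1 < r) (ht : 1 ≤ t) :
    (t * shiftedLogLog t * φ t) ^ (1 / r) / t ≤
      (max B 1 * (1 + 2 * exp δ) + (1 + exp 1)) *
        (log (conjExponent r) ^ (δ / r) + log (conjExponent r) ^ (1 / r) *
          sSup {y | ∃ t, exp (exp (log (conjExponent r) ^ δ)) ≤ t ∧ y = φ t ^ (1 / r)}) := by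
  have hL := log_conjExponent_pos hr
  set L := log (conjExponent r)
  set T := exp (exp (L ^ δ))
  set S := sSup {y | ∃ t, T ≤ t ∧ y = φ t ^ (1 / r)}
  have hT : exp 1 ≤ T := exp_le_exp.2 (one_le_exp (by positivity))
  have hT1 : 1 ≤ T := (one_le_exp zero_le_one).trans hT
  have hφS : ∀ s, T ≤ s → φ s ^ (1 / r) ≤ S := by
    refine fun s hs => le_csSup ⟨max B 1, ?_⟩ ⟨s, hs, rfl⟩
    rintro _ ⟨u, hu, rfl⟩
    have hu1 : 1 ≤ u := hT1.trans hu
    exact rpow_one_div_le_max_one hr.le (hφ u hu1) (hφB u hu1)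
  have hS : 0 ≤ S := (rpow_nonneg (hφ T hT1) _).trans (hφS T le_rfl)
  have hφt := hφ t ht
  have hfactor : (t * shiftedLogLog t * φ t) ^ (1 / r) / t =
      (t * shiftedLogLog t) ^ (1 / r) / t * φ t ^ (1 / r) := by
    have := one_le_shiftedLogLog (zero_le_one.trans ht)
    rw [mul_rpow (by positivity) hφt, div_mul_eq_mul_div]
  have hbound : (t * shiftedLogLog t * φ t) ^ (1 / r) / t ≤
      (1 + 2 * exp δ) * L ^ (δ / r) * max B 1 + (1 + exp 1) * L ^ (1 / r) * S := by
    rw [hfactor]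
    rcases le_total t T with htT | hTt
    · refine le_add_of_le_of_nonneg ?_ (by positivity)
      gcongr
      · exact mul_shiftedLogLog_rpow_div_le_of_le hr hδ ht htT
      · exact rpow_one_div_le_max_one hr.le hφt (hφB t ht)
    · refine le_add_of_nonneg_of_le (by positivity) ?_
      gcongr
      · exact mul_shiftedLogLog_rpow_div_le hr (hT.trans hTt)
      · exact hφS t hTt
  have hcross : 0 ≤ (1 + exp 1) * L ^ (δ / r) +
      max B 1 * (1 + 2 * exp δ) * (L ^ (1 / r) * S) := by positivity
  linarith

end

theorem statement14_general (B δ : ℝ) (hδ : 0 ≤ δ) :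
    ∃ c : ℝ, 0 < c ∧ ∀ φ : ℝ → ℝ,
      (∀ t : ℝ, 1 ≤ t → 0 ≤ φ t) → (∀ t : ℝ, 1 ≤ t → φ t ≤ B) →
      ∀ r : ℝ, 1 < r →
        sSup {y : ℝ | ∃ t : ℝ, 1 ≤ t ∧
            y = (t * Real.log (Real.log (Real.exp (Real.exp 1) + t)) * φ t)
                  ^ (1 / r) / t}
          ≤ c * (Real.log (r / (r - 1)) ^ (δ / r)
              + Real.log (r / (r - 1)) ^ (1 / r) *
                  sSup {y : ℝ | ∃ t : ℝ,
                    Real.exp (Real.exp (Real.log (r / (r - 1)) ^ δ)) ≤ t ∧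
                      y = φ t ^ (1 / r)}) := by
  refine ⟨max B 1 * (1 + 2 * Real.exp δ) + (1 + Real.exp 1), by positivity,
    fun φ hφ hφB r hr => csSup_le ⟨_, 1, le_rfl, rfl⟩ ?_⟩
  rintro _ ⟨t, ht, rfl⟩
  exact mul_shiftedLogLog_mul_rpow_div_le hδ hφ hφB hr ht

/-- Let `φ : [1,∞) → (0,∞)` be bounded (by `B`) and let
`Φ(t) = t log log(e^e + t) φ(t)`. For every `δ ∈ (0,1)` there is `c > 0`,
depending only on `δ` and `B`, such that for every `r ∈ (1,2)` (with
`r' = r/(r−1)`):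
`sup_{t≥1} Φ(t)^{1/r}/t
  ≤ c ((log r')^{δ/r} + (log r')^{1/r} sup_{t ≥ e^{e^{(log r')^δ}}} φ(t)^{1/r})`. -/
theorem statement14 (B δ : ℝ) (hδ0 : 0 < δ) (hδ1 : δ < 1) :
    ∃ c : ℝ, 0 < c ∧ ∀ φ : ℝ → ℝ,
      (∀ t : ℝ, 1 ≤ t → 0 < φ t) → (∀ t : ℝ, 1 ≤ t → φ t ≤ B) →
      ∀ r : ℝ, 1 < r → r < 2 →
        sSup {y : ℝ | ∃ t : ℝ, 1 ≤ t ∧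
            y = (t * Real.log (Real.log (Real.exp (Real.exp 1) + t)) * φ t)
                  ^ (1 / r) / t}
          ≤ c * (Real.log (r / (r - 1)) ^ (δ / r)
              + Real.log (r / (r - 1)) ^ (1 / r) *
                  sSup {y : ℝ | ∃ t : ℝ,
                    Real.exp (Real.exp (Real.log (r / (r - 1)) ^ δ)) ≤ t ∧
                      y = φ t ^ (1 / r)}) :=
  let ⟨c, hc, h⟩ := statement14_general B δ hδ0.le
  ⟨c, hc, fun φ hφ hφB r hr _ => h φ (fun t ht => (hφ t ht).le) hφB r hr⟩

end RT

end
end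

section
/- One has ∫_{E} w_k dx = 1/3, where E = ∪_{l≥1} ∪_{I ∈ ℐ_l} I^Δ and w_k(x) = Σ_{l=1}^∞ (3^k/(3^{k−1}+1))^l · χ_{Ω_l}(x). Equivalently, w_k(E) = (1/3)·w_k([0,1]). -/
open MeasureTheory Set Filter Topology
open scoped ENNReal

noncomputable section

namespace RT

/-!
The intervals of `𝒥_l` are pairwise disjoint, and those of `𝒥_{l+1}` tile the middle thirds of
those of `𝒥_l`, so `𝒥_l` covers a set of measure `3^{-(l-1)}`. Each `P J` occupies the proportion
`3^{-k}` of `J` and misses `J^Δ`, where all later generations live. Hence the `Ω_l` are pairwise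
disjoint with `|Ω_l| = 3^{-k} 3^{-(l-1)}`, and the total mass of `w_k` is a geometric series with
sum `1`. Since `E` meets every `Ω_l` in exactly one third of its measure, `w_k(E) = 1/3`.
-/

section

open scoped Function

theorem integral_tsum_mul_indicator {α ι : Type*} [MeasurableSpace α] [Countable ι]
    {μ : Measure α} {A : ι → Set α} {c : ι → ℝ} {a : ℝ} (hA : ∀ i, MeasurableSet (A i))
    (hfin : ∀ i, μ (A i) ≠ ∞) (hsum : HasSum (fun i => c i * μ.real (A i)) a) :
    ∫ x, ∑' i, c i * (A i).indicator (fun _ => (1 : ℝ)) x ∂μ = a := by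
  have hint (i : ι) (r : ℝ) :
      ∫ x, r * (A i).indicator (fun _ => (1 : ℝ)) x ∂μ = r * μ.real (A i) := by
    rw [integral_const_mul, integral_indicator_const _ (hA i), smul_eq_mul, mul_one]
  have hnorm (i : ι) :
      ∫ x, ‖c i * (A i).indicator (fun _ => (1 : ℝ)) x‖ ∂μ = |c i * μ.real (A i)| := by
    simp only [norm_mul, norm_indicator_eq_indicator_norm, norm_one, hint, Real.norm_eq_abs,
      abs_mul, abs_of_nonneg measureReal_nonneg]
  have h := hasSum_integral_of_summable_integral_norm (μ := μ)
    (F := fun i x => c i * (A i).indicator (fun _ => (1 : ℝ)) x)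
    (fun i => ((integrable_indicator_iff (hA i)).2 (integrableOn_const (hfin i))).const_mul _)
    (by simpa only [hnorm] using hsum.summable.abs)
  simp only [hint] at h
  exact h.unique hsum

theorem inter_iUnion_eq_of_pairwise_disjoint {α ι : Type*} {A B : ι → Set α}
    (hA : Pairwise (Disjoint on A)) (hBA : ∀ i, B i ⊆ A i) (i : ι) :
    A i ∩ ⋃ j, B j = B i := by
  refine Subset.antisymm ?_ (subset_inter (hBA i) (subset_iUnion B i))
  rintro x ⟨hxA, hxB⟩
  obtain ⟨j, hxj⟩ := mem_iUnion.1 hxB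
  obtain rfl : i = j := hA.eq (not_disjoint_iff.2 ⟨x, hxA, hBA j hxj⟩)
  exact hxj

variable {I J : ℝ × ℝ} {x : ℝ} {k l : ℕ} {P f g : ℝ × ℝ → ℝ × ℝ}

theorem len_mid (J : ℝ × ℝ) : len (mid J) = len J / 3 := by
  simp only [len, mid]
  ring

theorem ivl_mid_subset (hJ : 0 ≤ len J) : ivl (mid J) ⊆ ivl J := by
  rw [len] at hJ
  exact Ico_subset_Ico (by simp only [mid]; linarith) (by simp only [mid]; linarith)

theorem volume_ivl (I : ℝ × ℝ) : volume (ivl I) = ENNReal.ofReal (len I) :=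
  Real.volume_Ico

theorem IsTriadic.exists_len_eq (hI : IsTriadic I) : ∃ j : ℤ, len I = 3 ^ j := by
  obtain ⟨j, n, h₁, h₂⟩ := hI
  exact ⟨j, by rw [len, h₁, h₂]; ring⟩

theorem IsTriadic.len_pos (hI : IsTriadic I) : 0 < len I := by
  obtain ⟨j, hj⟩ := hI.exists_len_eq
  rw [hj]
  positivity

theorem isTriadic_mid (hJ : IsTriadic J) : IsTriadic (mid J) := by
  obtain ⟨j, n, h₁, h₂⟩ := hJ
  have hpow : (3 : ℝ) ^ j = 3 * 3 ^ (j - 1) := by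
    rw [zpow_sub_one₀ three_ne_zero]
    ring
  refine ⟨j - 1, 3 * n + 1, ?_, ?_⟩ <;> simp only [mid, h₁, h₂, hpow] <;> push_cast <;> ring

theorem exists_isTriadic_mem_ivl (j : ℤ) (x : ℝ) :
    ∃ I, IsTriadic I ∧ len I = 3 ^ j ∧ x ∈ ivl I := by
  have hpos : (0 : ℝ) < 3 ^ j := by positivity
  refine ⟨(3 ^ j * ⌊x / 3 ^ j⌋, 3 ^ j * (⌊x / 3 ^ j⌋ + 1)), ⟨j, _, rfl, rfl⟩, ?_, ?_, ?_⟩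
  · simp only [len]
    ring
  · exact (le_div_iff₀' hpos).1 (Int.floor_le _)
  · exact (div_lt_iff₀' hpos).1 (Int.lt_floor_add_one _)

theorem IsTriadic.ivl_subset_ivl (hI : IsTriadic I) (hJ : IsTriadic J) (hlen : len I ≤ len J)
    (hxI : x ∈ ivl I) (hxJ : x ∈ ivl J) : ivl I ⊆ ivl J := by
  obtain ⟨i, n, hI₁, hI₂⟩ := hI
  obtain ⟨j, m, hJ₁, hJ₂⟩ := hJ
  have hij : i ≤ j := by
    have hpow : (3 : ℝ) ^ i ≤ 3 ^ j := by
      simp only [len, hI₁, hI₂, hJ₁, hJ₂] at hlen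
      linarith
    exact (zpow_le_zpow_iff_right₀ (by norm_num)).1 hpow
  obtain ⟨d, rfl⟩ := Int.le.dest hij
  have hpos : (0 : ℝ) < 3 ^ i := by positivity
  rw [zpow_add₀ three_ne_zero, zpow_natCast, mul_assoc] at hJ₁ hJ₂
  simp only [ivl, hI₁, hI₂, hJ₁, hJ₂] at hxI hxJ ⊢
  have hleft : 3 ^ d * m < n + 1 := by
    exact_mod_cast lt_of_mul_lt_mul_left (hxJ.1.trans_lt hxI.2) hpos.le
  have hright : n < 3 ^ d * (m + 1) := by
    exact_mod_cast lt_of_mul_lt_mul_left (hxI.1.trans_lt hxJ.2) hpos.le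
  refine Ico_subset_Ico (mul_le_mul_of_nonneg_left ?_ hpos.le)
    (mul_le_mul_of_nonneg_left ?_ hpos.le)
  · exact_mod_cast Int.lt_add_one_iff.1 hleft
  · exact_mod_cast Int.add_one_le_iff.2 hright

theorem IsTriadic.eq_of_len_eq (hI : IsTriadic I) (hJ : IsTriadic J) (hlen : len I = len J)
    (hxI : x ∈ ivl I) (hxJ : x ∈ ivl J) : I = J := by
  have hIJ := (Ico_subset_Ico_iff (hxI.1.trans_lt hxI.2)).1
    (hI.ivl_subset_ivl hJ hlen.le hxI hxJ)
  have hJI := (Ico_subset_Ico_iff (hxJ.1.trans_lt hxJ.2)).1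
    (hJ.ivl_subset_ivl hI hlen.ge hxJ hxI)
  exact Prod.ext (hJI.1.antisymm hIJ.1) (hIJ.2.antisymm hJI.2)

theorem countable_setOf_isTriadic : {I | IsTriadic I}.Countable := by
  refine (countable_range fun p : ℤ × ℤ =>
    ((3 : ℝ) ^ p.1 * p.2, (3 : ℝ) ^ p.1 * (p.2 + 1))).mono ?_
  rintro I ⟨j, n, h₁, h₂⟩
  exact ⟨(j, n), (Prod.ext h₁ h₂).symm⟩

theorem isTriadic_of_mem_Jfam (hJ : J ∈ Jfam k l) : IsTriadic J := by
  match l, hJ with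
  | 1, hJ =>
    obtain rfl : J = (0, 1) := hJ
    exact ⟨0, 0, by simp, by simp⟩
  | _ + 2, hJ => exact hJ.1

theorem ivl_subset_of_mem_Jfam (hJ : J ∈ Jfam k l) : ivl J ⊆ Ico 0 1 := by
  induction l using Nat.twoStepInduction generalizing J with
  | zero => exact hJ.elim
  | one => exact (congrArg ivl hJ).subset
  | more l _ ih =>
    obtain ⟨-, J₀, hJ₀, -, hsub⟩ := hJ
    exact hsub.trans ((ivl_mid_subset (isTriadic_of_mem_Jfam hJ₀).len_pos.le).trans (ih hJ₀))

theorem len_eq_of_mem_Jfam (hI : I ∈ Jfam k l) (hJ : J ∈ Jfam k l) : len I = len J := by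
  induction l using Nat.twoStepInduction generalizing I J with
  | zero => exact hI.elim
  | one => exact congrArg len (Eq.trans hI (Eq.symm hJ))
  | more l _ ih =>
    obtain ⟨-, I₀, hI₀, hlenI, -⟩ := hI
    obtain ⟨-, J₀, hJ₀, hlenJ, -⟩ := hJ
    rw [hlenI, hlenJ, ih hI₀ hJ₀]

theorem pairwiseDisjoint_ivl_Jfam (k l : ℕ) : (Jfam k l).PairwiseDisjoint ivl := by
  intro I hI J hJ hne
  refine disjoint_left.2 fun x hxI hxJ => hne ?_
  exact (isTriadic_of_mem_Jfam hI).eq_of_len_eq (isTriadic_of_mem_Jfam hJ)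
    (len_eq_of_mem_Jfam hI hJ) hxI hxJ

theorem countable_Jfam (k l : ℕ) : (Jfam k l).Countable :=
  countable_setOf_isTriadic.mono fun _ => isTriadic_of_mem_Jfam

/-- `Omega k f l` makes sense for every `f`: `f = id` gives the union of `𝒥_l`, `f = mid` the union
of its middle thirds, and `f = mid ∘ P` the `l`-th layer of `E`. -/
theorem Omega_eq_biUnion (k : ℕ) (f : ℝ × ℝ → ℝ × ℝ) (l : ℕ) :
    Omega k f l = ⋃ J ∈ Jfam k l, ivl (f J) :=
  biUnion_image

theorem mem_Omega : x ∈ Omega k f l ↔ ∃ J ∈ Jfam k l, x ∈ ivl (f J) := by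
  simp only [Omega_eq_biUnion, mem_iUnion, exists_prop]

theorem Omega_mono (h : ∀ J ∈ Jfam k l, ivl (f J) ⊆ ivl (g J)) : Omega k f l ⊆ Omega k g l := by
  simpa only [Omega_eq_biUnion] using iUnion₂_mono h

theorem measurableSet_Omega (k : ℕ) (f : ℝ × ℝ → ℝ × ℝ) (l : ℕ) : MeasurableSet (Omega k f l) := by
  rw [Omega_eq_biUnion]
  exact .biUnion (countable_Jfam k l) fun _ _ => measurableSet_Ico

theorem Omega_id_subset (k l : ℕ) : Omega k id l ⊆ Ico 0 1 := by
  rw [Omega_eq_biUnion]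
  exact iUnion₂_subset fun _ => ivl_subset_of_mem_Jfam

theorem Omega_mid_subset (k l : ℕ) : Omega k mid l ⊆ Omega k id l :=
  Omega_mono fun _ hJ => ivl_mid_subset (isTriadic_of_mem_Jfam hJ).len_pos.le

theorem Omega_id_succ_subset (k l : ℕ) : Omega k id (l + 2) ⊆ Omega k mid (l + 1) := by
  intro x hx
  obtain ⟨J', ⟨-, J, hJ, -, hsub⟩, hx⟩ := mem_Omega.1 hx
  exact mem_Omega.2 ⟨J, hJ, hsub hx⟩

theorem Omega_id_succ (hk : k ≠ 0) (l : ℕ) : Omega k id (l + 2) = Omega k mid (l + 1) := by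
  refine (Omega_id_succ_subset k l).antisymm fun x hx => ?_
  obtain ⟨J, hJ, hxJ⟩ := mem_Omega.1 hx
  have hJt := isTriadic_of_mem_Jfam hJ
  obtain ⟨j, hj⟩ := hJt.exists_len_eq
  obtain ⟨I, hI, hIlen, hxI⟩ := exists_isTriadic_mem_ivl (j - k) x
  have hlen : len I = len J / 3 ^ k := by
    rw [hIlen, hj, zpow_sub₀ three_ne_zero, zpow_natCast]
  have hle : len I ≤ len (mid J) := by
    rw [hlen, len_mid]
    exact div_le_div_of_nonneg_left hJt.len_pos.le three_pos (le_self_pow₀ (by norm_num) hk)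
  exact mem_Omega.2
    ⟨I, ⟨hI, J, hJ, hlen, hI.ivl_subset_ivl (isTriadic_mid hJt) hle hxI hxJ⟩, hxI⟩

theorem antitone_Omega_id (k : ℕ) : Antitone fun l => Omega k id (l + 1) :=
  antitone_nat_of_succ_le fun l => (Omega_id_succ_subset k l).trans (Omega_mid_subset k (l + 1))

theorem volume_Omega (hsub : ∀ J ∈ Jfam k l, ivl (f J) ⊆ ivl J) :
    volume (Omega k f l) = ∑' J : Jfam k l, ENNReal.ofReal (len (f J)) := by
  rw [Omega_eq_biUnion, measure_biUnion (f := fun J => ivl (f J)) (countable_Jfam k l) _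
    fun _ _ => measurableSet_Ico]
  · simp only [volume_ivl]
  · exact fun I hI J hJ hne =>
      (pairwiseDisjoint_ivl_Jfam k l hI hJ hne).mono (hsub I hI) (hsub J hJ)

theorem volume_Omega_eq_mul {c : ℝ} (hsub : ∀ J ∈ Jfam k l, ivl (f J) ⊆ ivl J)
    (hlen : ∀ J ∈ Jfam k l, len (f J) = c * len J) :
    volume (Omega k f l) = ENNReal.ofReal c * volume (Omega k id l) := by
  rw [volume_Omega hsub, volume_Omega (f := id) fun _ _ => subset_rfl, ← ENNReal.tsum_mul_left]
  refine tsum_congr fun J => ?_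
  rw [hlen J J.2, ENNReal.ofReal_mul' (isTriadic_of_mem_Jfam J.2).len_pos.le, id]

theorem volume_Omega_id (hk : k ≠ 0) (l : ℕ) :
    volume (Omega k id (l + 1)) = ENNReal.ofReal ((1 / 3) ^ l) := by
  induction l with
  | zero => simp [Omega_eq_biUnion, Jfam, volume_ivl, len]
  | succ l ih =>
    have hlen (J : ℝ × ℝ) : len (mid J) = 1 / 3 * len J := by
      rw [len_mid]
      ring
    rw [Omega_id_succ hk, volume_Omega_eq_mul
      (fun _ hJ => ivl_mid_subset (isTriadic_of_mem_Jfam hJ).len_pos.le) (fun J _ => hlen J),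
      ih, ← ENNReal.ofReal_mul (by norm_num), pow_succ']

theorem volume_real_Omega_of_len_eq (hk : k ≠ 0) {c : ℝ} (hc : 0 ≤ c)
    (hsub : ∀ J ∈ Jfam k (l + 1), ivl (f J) ⊆ ivl J)
    (hlen : ∀ J ∈ Jfam k (l + 1), len (f J) = c * len J) :
    volume.real (Omega k f (l + 1)) = c * (1 / 3) ^ l := by
  rw [Measure.real, volume_Omega_eq_mul hsub hlen, volume_Omega_id hk, ENNReal.toReal_mul,
    ENNReal.toReal_ofReal hc, ENNReal.toReal_ofReal (by positivity)]

/-- A choice, for every `J` in the families `𝒥_l`, of a subinterval `P J` of `J` that misses the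
middle third `J^Δ` and has length `3^{-k} |J|`. In contrast to `GoodP`, `P J` may be neither triadic
nor adjacent to `J^Δ`. -/
structure IsSideSelection (k : ℕ) (P : ℝ × ℝ → ℝ × ℝ) : Prop where
  subset : ∀ ⦃l J⦄, J ∈ Jfam k l → ivl (P J) ⊆ ivl J
  disjoint_mid : ∀ ⦃l J⦄, J ∈ Jfam k l → Disjoint (ivl (P J)) (ivl (mid J))
  len_eq : ∀ ⦃l J⦄, J ∈ Jfam k l → len (P J) = len J / 3 ^ k

theorem GoodP.isSideSelection (hk : k ≠ 0) (hP : GoodP k P) : IsSideSelection k P := by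
  have hspec ⦃l : ℕ⦄ ⦃J : ℝ × ℝ⦄ (hJ : J ∈ Jfam k l) :=
    (hP J (isTriadic_of_mem_Jfam hJ) (ivl_subset_of_mem_Jfam hJ)).2
  refine ⟨fun l J hJ => ?_, fun l J hJ => ?_, fun l J hJ => (hspec hJ).1⟩
  · have hpos := (isTriadic_of_mem_Jfam hJ).len_pos
    have hle : len (P J) ≤ len J / 3 := by
      rw [(hspec hJ).1]
      exact div_le_div_of_nonneg_left hpos.le three_pos (le_self_pow₀ (by norm_num) hk)
    simp only [len] at hle hpos
    rcases (hspec hJ).2 with hadj | hadj <;> simp only [mid] at hadj <;>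
      exact Ico_subset_Ico (by linarith) (by linarith)
  · rcases (hspec hJ).2 with hleft | hright
    · exact Ico_disjoint_Ico_same.mono_left (Ico_subset_Ico_right hleft.le)
    · exact (Ico_disjoint_Ico_same.mono_right (Ico_subset_Ico_left hright.ge)).symm

theorem IsSideSelection.ne_zero (hP : IsSideSelection k P) : k ≠ 0 := by
  rintro rfl
  have hJ : ((0, 1) : ℝ × ℝ) ∈ Jfam 0 1 := rfl
  have hlen : (P (0, 1)).2 - (P (0, 1)).1 = 1 := by simpa [len] using hP.len_eq hJ
  have hsub := (Ico_subset_Ico_iff (by linarith)).1 (hP.subset hJ)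
  refine disjoint_left.1 (hP.disjoint_mid hJ) (?_ : (1 / 2 : ℝ) ∈ _) ?_
  · exact ⟨by linarith [hsub.2], by linarith [hsub.1]⟩
  · norm_num [ivl, mid]

theorem IsSideSelection.Omega_subset (hP : IsSideSelection k P) (l : ℕ) :
    Omega k P l ⊆ Omega k id l :=
  Omega_mono fun _ hJ => hP.subset hJ

theorem IsSideSelection.len_nonneg (hP : IsSideSelection k P) (hJ : J ∈ Jfam k l) :
    0 ≤ len (P J) := by
  rw [hP.len_eq hJ]
  exact div_nonneg (isTriadic_of_mem_Jfam hJ).len_pos.le (by positivity)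

theorem IsSideSelection.disjoint_Omega_mid (hP : IsSideSelection k P) (l : ℕ) :
    Disjoint (Omega k P l) (Omega k mid l) := by
  refine disjoint_left.2 fun x hx hx' => ?_
  obtain ⟨I, hI, hxI⟩ := mem_Omega.1 hx
  obtain ⟨J, hJ, hxJ⟩ := mem_Omega.1 hx'
  have hxJ' := ivl_mid_subset (isTriadic_of_mem_Jfam hJ).len_pos.le hxJ
  obtain rfl : I = J := (pairwiseDisjoint_ivl_Jfam k l).elim_set hI hJ x (hP.subset hI hxI) hxJ'
  exact disjoint_left.1 (hP.disjoint_mid hI) hxI hxJ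

theorem IsSideSelection.pairwise_disjoint_Omega (hP : IsSideSelection k P) :
    Pairwise (Disjoint on fun l => Omega k P (l + 1)) := by
  refine (pairwise_disjoint_on _).2 fun l m hlm => ?_
  have hsub : Omega k P (m + 1) ⊆ Omega k mid (l + 1) :=
    calc Omega k P (m + 1) ⊆ Omega k id (m + 1) := hP.Omega_subset _
      _ ⊆ Omega k id (l + 2) := antitone_Omega_id k hlm
      _ ⊆ Omega k mid (l + 1) := Omega_id_succ_subset k l
  exact (hP.disjoint_Omega_mid (l + 1)).mono_right hsub

theorem IsSideSelection.volume_real_Omega (hP : IsSideSelection k P) (l : ℕ) :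
    volume.real (Omega k P (l + 1)) = 1 / 3 ^ k * (1 / 3) ^ l :=
  volume_real_Omega_of_len_eq hP.ne_zero (by positivity) (fun _ hJ => hP.subset hJ) fun J hJ => by
    rw [hP.len_eq hJ]
    ring

theorem IsSideSelection.volume_real_Omega_mid_comp (hP : IsSideSelection k P) (l : ℕ) :
    volume.real (Omega k (mid ∘ P) (l + 1)) = 1 / 3 * volume.real (Omega k P (l + 1)) := by
  rw [hP.volume_real_Omega, ← mul_assoc]
  refine volume_real_Omega_of_len_eq hP.ne_zero (by positivity)
    (fun J hJ => (ivl_mid_subset (hP.len_nonneg hJ)).trans (hP.subset hJ)) fun J hJ => ?_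
  rw [Function.comp_apply, len_mid, hP.len_eq hJ]
  ring

theorem alpha_div_pow (hk : k ≠ 0) : alpha k / 3 ^ k = 1 - alpha k / 3 := by
  obtain ⟨q, rfl⟩ := Nat.exists_eq_succ_of_ne_zero hk
  simp only [alpha, Nat.succ_eq_add_one, Nat.add_sub_cancel]
  field_simp
  ring

theorem hasSum_alpha_pow (hk : k ≠ 0) :
    HasSum (fun l : ℕ => alpha k ^ (l + 1) * (1 / 3 ^ k * (1 / 3) ^ l)) 1 := by
  have hpos : 0 < alpha k := by
    rw [alpha]
    positivity
  have hlt : alpha k / 3 < 1 := by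
    rw [← sub_pos, ← alpha_div_pow hk]
    positivity
  have hterm (l : ℕ) : alpha k ^ (l + 1) * (1 / 3 ^ k * (1 / 3) ^ l) =
      (1 - alpha k / 3) * (alpha k / 3) ^ l := by
    rw [← alpha_div_pow hk]
    ring
  simp only [hterm]
  have h := (hasSum_geometric_of_lt_one (by positivity) hlt).mul_left (1 - alpha k / 3)
  rwa [mul_inv_cancel₀ (sub_pos.2 hlt).ne'] at h

theorem IsSideSelection.setIntegral_wk (hP : IsSideSelection k P) {S : Set ℝ} {c : ℝ}
    (hS : ∀ l, volume.real (Omega k P (l + 1) ∩ S) = c * volume.real (Omega k P (l + 1))) :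
    ∫ x in S, wk k P x = c := by
  have hmeas (l : ℕ) := measurableSet_Omega k P (l + 1)
  have hfin (l : ℕ) : volume.restrict S (Omega k P (l + 1)) ≠ ∞ := by
    have hsub := (hP.Omega_subset (l + 1)).trans (Omega_id_subset k (l + 1))
    exact ((Measure.restrict_apply_le _ _).trans_lt
      ((measure_mono hsub).trans_lt measure_Ico_lt_top)).ne
  have hsum : HasSum (fun l : ℕ =>
      alpha k ^ (l + 1) * (volume.restrict S).real (Omega k P (l + 1))) c := by
    simp only [measureReal_restrict_apply (hmeas _), hS, hP.volume_real_Omega, mul_left_comm _ c]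
    simpa only [mul_one] using (hasSum_alpha_pow hP.ne_zero).mul_left c
  exact integral_tsum_mul_indicator hmeas hfin hsum

theorem IsSideSelection.setIntegral_wk_iUnion_mid (hP : IsSideSelection k P) :
    ∫ x in ⋃ l : ℕ, ⋃ I ∈ Ifam k P (l + 1), ivl (mid I), wk k P x = 1 / 3 := by
  have hE : (⋃ l : ℕ, ⋃ I ∈ Ifam k P (l + 1), ivl (mid I)) =
      ⋃ l : ℕ, Omega k (mid ∘ P) (l + 1) := by
    simp only [Omega_eq_biUnion, Ifam, biUnion_image, Function.comp_apply]
  have hsub (l : ℕ) : Omega k (mid ∘ P) (l + 1) ⊆ Omega k P (l + 1) :=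
    Omega_mono fun _ hJ => ivl_mid_subset (hP.len_nonneg hJ)
  rw [hE]
  refine hP.setIntegral_wk fun l => ?_
  rw [inter_iUnion_eq_of_pairwise_disjoint hP.pairwise_disjoint_Omega hsub l,
    hP.volume_real_Omega_mid_comp]

theorem IsSideSelection.setIntegral_wk_Icc (hP : IsSideSelection k P) :
    ∫ x in Icc (0 : ℝ) 1, wk k P x = 1 := by
  refine hP.setIntegral_wk fun l => ?_
  have hsub := (hP.Omega_subset (l + 1)).trans (Omega_id_subset k (l + 1))
  rw [inter_eq_left.2 (hsub.trans Ico_subset_Icc_self), one_mul]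

end

theorem statement16_general (k : ℕ) (P : ℝ × ℝ → ℝ × ℝ) (hP : IsSideSelection k P) :
    (∫ x in ⋃ l : ℕ, ⋃ I ∈ Ifam k P (l + 1), ivl (mid I), wk k P x)
        = 1 / 3 ∧
      (∫ x in ⋃ l : ℕ, ⋃ I ∈ Ifam k P (l + 1), ivl (mid I), wk k P x)
        = (1 / 3) * ∫ x in Icc (0:ℝ) 1, wk k P x := by
  rw [hP.setIntegral_wk_iUnion_mid, hP.setIntegral_wk_Icc, mul_one]
  exact ⟨rfl, rfl⟩

/-- With `E = ⋃_{l≥1} ⋃_{I ∈ ℐ_l} I^Δ`, one has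
`∫_E w_k = 1/3`; equivalently `w_k(E) = (1/3) w_k([0,1])`. -/
theorem statement16 (k : ℕ) (hk : 2 ≤ k) (P : ℝ × ℝ → ℝ × ℝ)
    (hP : GoodP k P) :
    (∫ x in ⋃ l : ℕ, ⋃ I ∈ Ifam k P (l + 1), ivl (mid I), wk k P x)
        = 1 / 3 ∧
      (∫ x in ⋃ l : ℕ, ⋃ I ∈ Ifam k P (l + 1), ivl (mid I), wk k P x)
        = (1 / 3) * ∫ x in Icc (0:ℝ) 1, wk k P x :=
  statement16_general k P (hP.isSideSelection (by omega))

end RT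

end
end
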